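/- arXiv:1604.01283 — 3 statements merged into one kernel-verified Lean document; each statement's English description precedes it below -/
import Mathlib

section
/- Let G be a finite group, k a field, and χ a tensor closed subadditive function on the finite dimensional kG-modules. Then Adloc(χ) is a thick subcategory of the category of finite dimensional kG-modules: it is closed under direct summands, and for every short exact sequence 0 → M' → M → M'' → 0 of finite dimensional kG-modules, if two of M, M', M'' belong to Adloc(χ) then so does the third. -/
/-- The composition length of a module (the length of a composition series,
zero if none exists). -/
noncomputable def compLength (R : Type) [Ring R] (M : Type) [AddCommGroup M] [Module R M] : ℕ := by
  classical
  exact if h : ∃ s : CompositionSeries (Submodule R M), s.head = ⊥ ∧ s.last = ⊤ then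
    h.choose.length else 0

/-- A module `M` is endofinite if it has finite composition length over its
endomorphism ring, which acts on `M` by application. -/
def IsEndofinite (A : Type) [Ring A] (M : Type) [AddCommGroup M] [Module A M] : Prop :=
  IsFiniteLength (Module.End A M) M

/-- The subadditive function `χ_M` associated to a module `M`:
`χ_M(X) = ℓ_{End_A(M)} Hom_A(X, M)`, where `End_A(M)` acts by postcomposition. -/
noncomputable def chiMod (A : Type) [Ring A] (M : Type) [AddCommGroup M] [Module A M]
    (X : Type) [AddCommGroup X] [Module A X] : ℕ :=
  compLength (Module.End A M) (X →ₗ[A] M)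

/-- A subadditive function on the finite dimensional (i.e. finitely generated)
modules over a finite dimensional algebra `A`: it depends only on the isomorphism
class, is additive on direct sums, and satisfies `χ(X) + χ(Z) ≥ χ(Y)` for every
exact sequence `X → Y → Z → 0`. -/
def IsSubadditive (A : Type) [Ring A]
    (χ : (X : Type) → [AddCommGroup X] → [Module A X] → ℕ) : Prop :=
  (∀ (X Y : Type) [AddCommGroup X] [Module A X] [AddCommGroup Y] [Module A Y],
      Module.Finite A X → Module.Finite A Y →
      (X ≃ₗ[A] Y) → χ X = χ Y) ∧
  (∀ (X Y : Type) [AddCommGroup X] [Module A X] [AddCommGroup Y] [Module A Y],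
      Module.Finite A X → Module.Finite A Y →
      χ (X × Y) = χ X + χ Y) ∧
  (∀ (X Y Z : Type) [AddCommGroup X] [Module A X] [AddCommGroup Y] [Module A Y]
      [AddCommGroup Z] [Module A Z],
      Module.Finite A X → Module.Finite A Y → Module.Finite A Z →
      ∀ (f : X →ₗ[A] Y) (g : Y →ₗ[A] Z),
      Function.Exact f g → Function.Surjective g → χ Y ≤ χ X + χ Z)

/-- Membership in the additive locus `Adloc(χ)`: `Z` is finite dimensional and
`χ(X) - χ(Y) + χ(Z) = 0` for every short exact sequence `0 → X → Y → Z → 0` of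
finite dimensional modules. -/
def MemAdloc (A : Type) [Ring A]
    (χ : (X : Type) → [AddCommGroup X] → [Module A X] → ℕ)
    (Z : Type) [AddCommGroup Z] [Module A Z] : Prop :=
  Module.Finite A Z ∧
  ∀ (X Y : Type) [AddCommGroup X] [Module A X] [AddCommGroup Y] [Module A Y],
    Module.Finite A X → Module.Finite A Y →
    ∀ (f : X →ₗ[A] Y) (g : Y →ₗ[A] Z),
    Function.Injective f → Function.Exact f g → Function.Surjective g →
    χ X + χ Z = χ Y

/-- The tensor product over `k` of two `kG`-modules, with the diagonal `G`-action. -/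
noncomputable abbrev dtensor (k G : Type) [Field k] [Group G] (M N : Type)
    [AddCommGroup M] [Module (MonoidAlgebra k G) M]
    [AddCommGroup N] [Module (MonoidAlgebra k G) N] : Type :=
  ((Representation.ofModule (k := k) (G := G) M).tprod (Representation.ofModule N)).asModule

/-- The additive group structure on `dtensor`, which is that of the tensor product over `k`. -/
noncomputable instance dtensorAddCommGroup (k G : Type) [Field k] [Group G] (M N : Type)
    [AddCommGroup M] [Module (MonoidAlgebra k G) M]
    [AddCommGroup N] [Module (MonoidAlgebra k G) N] : AddCommGroup (dtensor k G M N) :=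
  @TensorProduct.addCommGroup k _ (RestrictScalars k (MonoidAlgebra k G) M)
    (RestrictScalars k (MonoidAlgebra k G) N) _ _
    (RestrictScalars.module k (MonoidAlgebra k G) M)
    (RestrictScalars.module k (MonoidAlgebra k G) N)

/-- The `kG`-module structure on `dtensor`, which is that of `Representation.asModule`. -/
noncomputable instance dtensorModule (k G : Type) [Field k] [Group G] (M N : Type)
    [AddCommGroup M] [Module (MonoidAlgebra k G) M]
    [AddCommGroup N] [Module (MonoidAlgebra k G) N] :
    @Module (MonoidAlgebra k G) (dtensor k G M N) _
      (dtensorAddCommGroup k G M N).toAddCommMonoid :=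
  Representation.instModuleMonoidAlgebraAsModule
    ((Representation.ofModule (k := k) (G := G) M).tprod (Representation.ofModule N))

/-- A function on `kG`-modules is tensor closed if its additive locus is closed under
tensoring (over `k`, with diagonal `G`-action) with finite dimensional modules. -/
def TensorClosed (k G : Type) [Field k] [Group G]
    (χ : (X : Type) → [AddCommGroup X] → [Module (MonoidAlgebra k G) X] → ℕ) : Prop :=
  ∀ (M N : Type) [AddCommGroup M] [Module (MonoidAlgebra k G) M]
    [AddCommGroup N] [Module (MonoidAlgebra k G) N],
    MemAdloc (MonoidAlgebra k G) χ M → Module.Finite (MonoidAlgebra k G) N →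
    MemAdloc (MonoidAlgebra k G) χ (dtensor k G M N)


theorem smul_ext_aux {k G : Type} [Field k] [Group G] {M N : Type}
    [AddCommGroup M] [Module (MonoidAlgebra k G) M]
    [AddCommGroup N] [Module (MonoidAlgebra k G) N] (φ : M →+ N)
    (h : ∀ (g : G) (c : k) (m : M), φ ((MonoidAlgebra.single g c : MonoidAlgebra k G) • m)
      = (MonoidAlgebra.single g c : MonoidAlgebra k G) • φ m) (a : MonoidAlgebra k G) (m : M) :
    φ (a • m) = a • φ m := by
  induction a using MonoidAlgebra.induction_linear with
  | zero => simp
  | add f g hf hg => simp [add_smul, hf, hg]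
  | single g c => exact h g c m

/-- additive map commuting with all monomials is linear -/
def mkLin {k G : Type} [Field k] [Group G] {M N : Type}
    [AddCommGroup M] [Module (MonoidAlgebra k G) M]
    [AddCommGroup N] [Module (MonoidAlgebra k G) N] (φ : M →+ N)
    (h : ∀ (g : G) (c : k) (m : M), φ ((MonoidAlgebra.single g c : MonoidAlgebra k G) • m)
      = (MonoidAlgebra.single g c : MonoidAlgebra k G) • φ m) : M →ₗ[MonoidAlgebra k G] N :=
  { φ with map_smul' := fun a m => smul_ext_aux φ h a m }

/-- the trace of a `k`-linear map -/
noncomputable def trLin {k G : Type} [Field k] [Group G] [Fintype G] {M N : Type}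
    [AddCommGroup M] [Module (MonoidAlgebra k G) M]
    [AddCommGroup N] [Module (MonoidAlgebra k G) N] (φ : M →+ N)
    (h : ∀ (c : k) (m : M), φ ((MonoidAlgebra.single 1 c : MonoidAlgebra k G) • m)
      = (MonoidAlgebra.single 1 c : MonoidAlgebra k G) • φ m) : M →ₗ[MonoidAlgebra k G] N :=
  mkLin
    { toFun := fun m => ∑ g : G, (MonoidAlgebra.single g 1 : MonoidAlgebra k G) •
        φ ((MonoidAlgebra.single g⁻¹ 1 : MonoidAlgebra k G) • m)
      map_zero' := by simp
      map_add' := by intro a b; simp [Finset.sum_add_distrib] }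
    (by
      intro x c m
      simp only [AddMonoidHom.coe_mk, ZeroHom.coe_mk, Finset.smul_sum]
      rw [← Equiv.sum_comp (Equiv.mulLeft x)]
      refine Finset.sum_congr rfl fun g _ => ?_
      simp only [Equiv.coe_mulLeft, smul_smul, MonoidAlgebra.single_mul_single, mul_inv_rev,
        inv_mul_cancel_right, one_mul, mul_one]
      have : (MonoidAlgebra.single g⁻¹ c : MonoidAlgebra k G) =
        MonoidAlgebra.single 1 c * MonoidAlgebra.single g⁻¹ 1 := by
        simp [MonoidAlgebra.single_mul_single]
      rw [this, mul_smul, h, smul_smul, MonoidAlgebra.single_mul_single]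
      simp)

theorem trLin_apply {k G : Type} [Field k] [Group G] [Fintype G] {M N : Type}
    [AddCommGroup M] [Module (MonoidAlgebra k G) M]
    [AddCommGroup N] [Module (MonoidAlgebra k G) N] (φ : M →+ N)
    (h : ∀ (c : k) (m : M), φ ((MonoidAlgebra.single 1 c : MonoidAlgebra k G) • m)
      = (MonoidAlgebra.single 1 c : MonoidAlgebra k G) • φ m) (m : M) :
    trLin φ h m = ∑ g : G, (MonoidAlgebra.single g 1 : MonoidAlgebra k G) •
        φ ((MonoidAlgebra.single g⁻¹ 1 : MonoidAlgebra k G) • m) := rfl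

theorem exists_ksection {k G : Type} [Field k] [Group G] {L M : Type}
    [AddCommGroup M] [Module (MonoidAlgebra k G) M]
    [AddCommGroup L] [Module (MonoidAlgebra k G) L] (g : L →ₗ[MonoidAlgebra k G] M)
    (hg : Function.Surjective g) : ∃ s : M →+ L, (∀ m, g (s m) = m) ∧
      ∀ (c : k) (m : M), s ((MonoidAlgebra.single 1 c : MonoidAlgebra k G) • m)
      = (MonoidAlgebra.single 1 c : MonoidAlgebra k G) • s m := by
  let _ : Module k M := Module.compHom M (algebraMap k (MonoidAlgebra k G))
  let _ : Module k L := Module.compHom L (algebraMap k (MonoidAlgebra k G))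
  let g' : L →ₗ[k] M := { g with map_smul' := fun c m => g.map_smul (algebraMap k _ c) m }
  obtain ⟨s, hs⟩ := LinearMap.exists_rightInverse_of_surjective g' (LinearMap.range_eq_top.2 hg)
  refine ⟨s.toAddMonoidHom, fun m => LinearMap.congr_fun hs m, fun c m => ?_⟩
  exact s.map_smul c m

theorem exists_kretraction {k G : Type} [Field k] [Group G] {L M : Type}
    [AddCommGroup M] [Module (MonoidAlgebra k G) M]
    [AddCommGroup L] [Module (MonoidAlgebra k G) L] (f : M →ₗ[MonoidAlgebra k G] L)
    (hf : Function.Injective f) : ∃ s : L →+ M, (∀ m, s (f m) = m) ∧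
      ∀ (c : k) (m : L), s ((MonoidAlgebra.single 1 c : MonoidAlgebra k G) • m)
      = (MonoidAlgebra.single 1 c : MonoidAlgebra k G) • s m := by
  let _ : Module k M := Module.compHom M (algebraMap k (MonoidAlgebra k G))
  let _ : Module k L := Module.compHom L (algebraMap k (MonoidAlgebra k G))
  let g' : M →ₗ[k] L := { f with map_smul' := fun c m => f.map_smul (algebraMap k _ c) m }
  obtain ⟨s, hs⟩ := LinearMap.exists_leftInverse_of_injective g' (LinearMap.ker_eq_bot.2 hf)
  refine ⟨s.toAddMonoidHom, fun m => LinearMap.congr_fun hs m, fun c m => ?_⟩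
  exact s.map_smul c m

/-- restriction of scalars -/
def RS (_k _G M : Type) : Type := M

instance RS.acg (k G M : Type) [AddCommGroup M] : AddCommGroup (RS k G M) :=
  inferInstanceAs (AddCommGroup M)

noncomputable instance RS.kmod (k G M : Type) [Field k] [Group G] [AddCommGroup M]
    [Module (MonoidAlgebra k G) M] : Module k (RS k G M) :=
  Module.compHom M (algebraMap k (MonoidAlgebra k G))

/-- the diagonal tensor product, with cleaner instances -/
def DT (k G M N : Type) [Field k] [Group G]
    [AddCommGroup M] [Module (MonoidAlgebra k G) M]
    [AddCommGroup N] [Module (MonoidAlgebra k G) N] : Type :=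
  TensorProduct k (RS k G M) (RS k G N)

noncomputable instance DT.acg (k G M N : Type) [Field k] [Group G]
    [AddCommGroup M] [Module (MonoidAlgebra k G) M]
    [AddCommGroup N] [Module (MonoidAlgebra k G) N] : AddCommGroup (DT k G M N) :=
  inferInstanceAs (AddCommGroup (TensorProduct k (RS k G M) (RS k G N)))

noncomputable instance DT.mod (k G M N : Type) [Field k] [Group G]
    [AddCommGroup M] [Module (MonoidAlgebra k G) M]
    [AddCommGroup N] [Module (MonoidAlgebra k G) N] : Module (MonoidAlgebra k G) (DT k G M N) :=
  dtensorModule k G M N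

theorem TensorClosed.dt (k G : Type) [Field k] [Group G]
    (χ : (X : Type) → [AddCommGroup X] → [Module (MonoidAlgebra k G) X] → ℕ)
    (h : TensorClosed k G χ) (M N : Type) [AddCommGroup M] [Module (MonoidAlgebra k G) M]
    [AddCommGroup N] [Module (MonoidAlgebra k G) N]
    (hM : MemAdloc (MonoidAlgebra k G) χ M) (hN : Module.Finite (MonoidAlgebra k G) N) :
    MemAdloc (MonoidAlgebra k G) χ (DT k G M N) := h M N hM hN

/-- pure tensor -/
noncomputable def dt {k G : Type} [Field k] [Group G] {M N : Type}
    [AddCommGroup M] [Module (MonoidAlgebra k G) M]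
    [AddCommGroup N] [Module (MonoidAlgebra k G) N] (m : M) (n : N) : DT k G M N :=
  TensorProduct.tmul k (m : RS k G M) (n : RS k G N)

theorem smul_dt {k G : Type} [Field k] [Group G] {M N : Type}
    [AddCommGroup M] [Module (MonoidAlgebra k G) M]
    [AddCommGroup N] [Module (MonoidAlgebra k G) N] (m : M) (n : N) (g : G) (c : k) :
    (MonoidAlgebra.single g c : MonoidAlgebra k G) • (dt m n : DT k G M N) =
     dt ((MonoidAlgebra.single g c : MonoidAlgebra k G) • m)
      ((MonoidAlgebra.single g 1 : MonoidAlgebra k G) • n) := by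
  have h1 : (MonoidAlgebra.single g c : MonoidAlgebra k G) • (dt m n : DT k G M N) =
    (((Representation.ofModule (k := k) (G := G) M).tprod
      (Representation.ofModule N)).asAlgebraHom (MonoidAlgebra.single g c)
      (TensorProduct.tmul k (m : RestrictScalars k (MonoidAlgebra k G) M)
    (n : RestrictScalars k (MonoidAlgebra k G) N)) : _) := rfl
  rw [h1, Representation.asAlgebraHom_single]
  have h2 : (MonoidAlgebra.single g c : MonoidAlgebra k G) =
    algebraMap k (MonoidAlgebra k G) c * MonoidAlgebra.single g 1 := by simp
  rw [h2, mul_smul]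
  rfl

theorem dt_add {k G : Type} [Field k] [Group G] {M N : Type}
    [AddCommGroup M] [Module (MonoidAlgebra k G) M]
    [AddCommGroup N] [Module (MonoidAlgebra k G) N] (m : M) (n n' : N)  :
    (dt m (n + n') : DT k G M N) = dt m n + dt m n' :=
  TensorProduct.tmul_add (R := k) (M := RS k G M) (N := RS k G N) (m : RS k G M) (n : RS k G N) (n' : RS k G N)

theorem add_dt {k G : Type} [Field k] [Group G] {M N : Type}
    [AddCommGroup M] [Module (MonoidAlgebra k G) M]
    [AddCommGroup N] [Module (MonoidAlgebra k G) N] (m m' : M) (n : N)  :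
    (dt (m + m') n : DT k G M N) = dt m n + dt m' n :=
  TensorProduct.add_tmul (R := k) (M := RS k G M) (N := RS k G N) (m : RS k G M) (m' : RS k G M) (n : RS k G N)

theorem dt_ind {k G : Type} [Field k] [Group G] {M N : Type}
    [AddCommGroup M] [Module (MonoidAlgebra k G) M]
    [AddCommGroup N] [Module (MonoidAlgebra k G) N] {p : DT k G M N → Prop}
    (h0 : p 0) (h1 : ∀ m n, p (dt m n)) (h2 : ∀ x y, p x → p y → p (x + y)) (x) : p x :=
  TensorProduct.induction_on (motive := p) x h0 h1 h2

theorem dt_bal {k G : Type} [Field k] [Group G] {M N : Type}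
    [AddCommGroup M] [Module (MonoidAlgebra k G) M]
    [AddCommGroup N] [Module (MonoidAlgebra k G) N] (m : M) (n : N) (c : k) :
    (dt ((MonoidAlgebra.single 1 c : MonoidAlgebra k G) • m) n : DT k G M N) =
     dt m ((MonoidAlgebra.single 1 c : MonoidAlgebra k G) • n) :=
  TensorProduct.smul_tmul (R := k) (R' := k) (M := RS k G M) (N := RS k G N) c (m : RS k G M) (n : RS k G N)

/-- restriction of scalars of a map -/
def resMap {k G : Type} [Field k] [Group G] {N N' : Type}
    [AddCommGroup N] [Module (MonoidAlgebra k G) N]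
    [AddCommGroup N'] [Module (MonoidAlgebra k G) N'] (f : N →ₗ[MonoidAlgebra k G] N') :
    RS k G N →ₗ[k] RS k G N' :=
  { f with map_smul' := fun c m => f.map_smul (algebraMap k _ c) m }

/-- functoriality, additive version -/
noncomputable def dmap0 {k G : Type} [Field k] [Group G] (M : Type) {N N' : Type}
    [AddCommGroup M] [Module (MonoidAlgebra k G) M]
    [AddCommGroup N] [Module (MonoidAlgebra k G) N]
    [AddCommGroup N'] [Module (MonoidAlgebra k G) N'] (f : N →ₗ[MonoidAlgebra k G] N') :
    DT k G M N →+ DT k G M N' :=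
  AddMonoidHom.mk' (fun x => (resMap f).lTensor (RS k G M) x) (fun x y =>
    map_add ((resMap f).lTensor (RS k G M)) x y)

theorem dmap0_dt {k G : Type} [Field k] [Group G] (M : Type) {N N' : Type}
    [AddCommGroup M] [Module (MonoidAlgebra k G) M]
    [AddCommGroup N] [Module (MonoidAlgebra k G) N]
    [AddCommGroup N'] [Module (MonoidAlgebra k G) N'] (f : N →ₗ[MonoidAlgebra k G] N') (m : M)
    (n : N) : dmap0 M f (dt m n) = dt m (f n) := rfl

/-- functoriality -/
noncomputable def dmap {k G : Type} [Field k] [Group G] (M : Type) {N N' : Type}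
    [AddCommGroup M] [Module (MonoidAlgebra k G) M]
    [AddCommGroup N] [Module (MonoidAlgebra k G) N]
    [AddCommGroup N'] [Module (MonoidAlgebra k G) N'] (f : N →ₗ[MonoidAlgebra k G] N') :
    DT k G M N →ₗ[MonoidAlgebra k G] DT k G M N' :=
  mkLin (dmap0 M f) (by
      intro g c x
      induction x using dt_ind with
      | h0 => rw [smul_zero, map_zero, smul_zero]
      | h1 m n => rw [smul_dt, dmap0_dt, dmap0_dt, smul_dt, map_smul]
      | h2 x y hx hy => rw [smul_add, map_add, map_add, smul_add, hx, hy])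

theorem dmap_dt {k G : Type} [Field k] [Group G] (M : Type) {N N' : Type}
    [AddCommGroup M] [Module (MonoidAlgebra k G) M]
    [AddCommGroup N] [Module (MonoidAlgebra k G) N]
    [AddCommGroup N'] [Module (MonoidAlgebra k G) N'] (f : N →ₗ[MonoidAlgebra k G] N') (m : M)
    (n : N) : dmap M f (dt m n) = dt m (f n) := rfl

theorem dmap_inj {k G : Type} [Field k] [Group G] (M : Type) {N N' : Type}
    [AddCommGroup M] [Module (MonoidAlgebra k G) M]
    [AddCommGroup N] [Module (MonoidAlgebra k G) N]
    [AddCommGroup N'] [Module (MonoidAlgebra k G) N'] (f : N →ₗ[MonoidAlgebra k G] N')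
    (hf : Function.Injective f) : Function.Injective (dmap M f) :=
  Module.Flat.lTensor_preserves_injective_linearMap (M := RS k G M) (resMap f) hf

theorem dmap_surj {k G : Type} [Field k] [Group G] (M : Type) {N N' : Type}
    [AddCommGroup M] [Module (MonoidAlgebra k G) M]
    [AddCommGroup N] [Module (MonoidAlgebra k G) N]
    [AddCommGroup N'] [Module (MonoidAlgebra k G) N'] (f : N →ₗ[MonoidAlgebra k G] N')
    (hf : Function.Surjective f) : Function.Surjective (dmap M f) :=
  LinearMap.lTensor_surjective (RS k G M) (g := resMap f) hf

/-- evaluation against a `k`-linear functional -/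
noncomputable def dev0 {k G : Type} [Field k] [Group G] {M N : Type}
    [AddCommGroup M] [Module (MonoidAlgebra k G) M]
    [AddCommGroup N] [Module (MonoidAlgebra k G) N] (t : RS k G N →ₗ[k] k) : DT k G M N →+ M :=
  AddMonoidHom.mk' (fun x => TensorProduct.rid k (RS k G M) (t.lTensor (RS k G M) x))
   (fun x y => (congrArg _ (map_add (t.lTensor (RS k G M)) x y)).trans (map_add _ _ _))

theorem dev0_dt {k G : Type} [Field k] [Group G] {M N : Type}
    [AddCommGroup M] [Module (MonoidAlgebra k G) M]
    [AddCommGroup N] [Module (MonoidAlgebra k G) N] (t : RS k G N →ₗ[k] k) (m : M) (n : N) : dev0 t (dt m n : DT k G M N) =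
    (MonoidAlgebra.single 1 (t n) : MonoidAlgebra k G) • m := by
  refine Eq.trans (b := t n • (show RS k G M from m)) ?_ rfl
  exact TensorProduct.rid_tmul (M := RS k G M) _ _

theorem dev0_smul {k G : Type} [Field k] [Group G] {M N : Type}
    [AddCommGroup M] [Module (MonoidAlgebra k G) M]
    [AddCommGroup N] [Module (MonoidAlgebra k G) N] (t : RS k G N →ₗ[k] k) (c : k) (x : DT k G M N) :
    dev0 t ((MonoidAlgebra.single 1 c : MonoidAlgebra k G) • x) =
    (MonoidAlgebra.single 1 c : MonoidAlgebra k G) • dev0 t x := by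
  induction x using dt_ind with
  | h0 => rw [smul_zero, map_zero, smul_zero]
  | h1 m n =>
    rw [smul_dt, dev0_dt, dev0_dt, smul_smul, smul_smul, ← MonoidAlgebra.one_def, one_smul]
    simp [MonoidAlgebra.single_mul_single, mul_comm]
  | h2 x y hx hy => rw [smul_add, map_add, map_add, smul_add, hx, hy]

theorem dmap_dev_exact {k G : Type} [Field k] [Group G] (M : Type) {N N' : Type}
    [AddCommGroup M] [Module (MonoidAlgebra k G) M]
    [AddCommGroup N] [Module (MonoidAlgebra k G) N]
    [AddCommGroup N'] [Module (MonoidAlgebra k G) N'] (f : N →ₗ[MonoidAlgebra k G] N') (t : RS k G N' →ₗ[k] k)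
    (h : ∀ y, t y = 0 → ∃ x, f x = y) (z : DT k G M N') (hz : dev0 t z = 0) :
    ∃ w, dmap M f w = z := by
  have hz' : t.lTensor (RS k G M) z = 0 := by
    apply (TensorProduct.rid k (RS k G M)).injective
    exact Eq.trans hz (map_zero (TensorProduct.rid k (RS k G M))).symm
  have h1 : LinearMap.ker t ≤ LinearMap.range (resMap f) := fun y hy => h y hy
  have hex : Function.Exact ((LinearMap.ker t).subtype.lTensor (RS k G M))
    (t.lTensor (RS k G M)) := Module.Flat.lTensor_exact (RS k G M) (LinearMap.exact_subtype_ker_map t)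
  obtain ⟨w, hw⟩ := (hex z).1 hz'
  rw [← hw]
  clear hw hz hz'
  induction w using TensorProduct.induction_on with
  | zero => exact ⟨0, rfl⟩
  | tmul m y =>
    obtain ⟨x, hx⟩ := h y y.2
    exact ⟨dt (k := k) (G := G) (M := M) m x, congrArg (dt (k := k) (G := G) (M := M) m) hx⟩
  | add a b ha hb =>
    obtain ⟨a', ha⟩ := ha
    obtain ⟨b', hb⟩ := hb
    refine ⟨a' + b', ?_⟩
    rw [map_add, ha, hb]
    exact (map_add ((LinearMap.ker t).subtype.lTensor (RS k G M)) a b).symm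

theorem dmap_ker_span {k G : Type} [Field k] [Group G] (M : Type) {N N' : Type}
    [AddCommGroup M] [Module (MonoidAlgebra k G) M]
    [AddCommGroup N] [Module (MonoidAlgebra k G) N]
    [AddCommGroup N'] [Module (MonoidAlgebra k G) N'] (f : N →ₗ[MonoidAlgebra k G] N') (s : N)
    (h : ∀ y, f y = 0 → ∃ c : k, (MonoidAlgebra.single 1 c : MonoidAlgebra k G) • s = y)
    (z : DT k G M N) (hz : dmap M f z = 0) :
    ∃ m : M, dt m s = z := by
  have hex : Function.Exact ((LinearMap.ker (resMap f)).subtype.lTensor (RS k G M))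
    ((resMap f).lTensor (RS k G M)) :=
      Module.Flat.lTensor_exact (RS k G M) (LinearMap.exact_subtype_ker_map (resMap f))
  obtain ⟨w, hw⟩ := (hex z).1 hz
  rw [← hw]
  clear hw hz
  induction w using TensorProduct.induction_on with
  | zero => exact ⟨0, TensorProduct.zero_tmul (R := k) (N := RS k G N) (RS k G M) s⟩
  | tmul m y =>
    obtain ⟨c, hc⟩ := h y.1 y.2
    refine ⟨(MonoidAlgebra.single 1 c : MonoidAlgebra k G) • (show M from m), ?_⟩
    rw [dt_bal, hc]
    rfl
  | add a b ha hb =>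
    obtain ⟨a', ha⟩ := ha
    obtain ⟨b', hb⟩ := hb
    refine ⟨a' + b', ?_⟩
    rw [add_dt, ha, hb]
    exact (map_add ((LinearMap.ker (resMap f)).subtype.lTensor (RS k G M)) a b).symm

/-- coefficient functional -/
def coefL (k G : Type) [Field k] [Group G] (g : G) : RS k G (MonoidAlgebra k G) →ₗ[k] k where
  toFun := fun x => MonoidAlgebra.coeff (show MonoidAlgebra k G from x) g
  map_add' := fun _ _ => rfl
  map_smul' := fun c x => by
    have : ∀ y : MonoidAlgebra k G,
        MonoidAlgebra.coeff ((algebraMap k (MonoidAlgebra k G) c) * y) g = c * y.coeff g := by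
      intro y; simp
    exact this x

/-- sum of coefficients -/
noncomputable def augL (k G : Type) [Field k] [Group G] [Fintype G] :
    RS k G (MonoidAlgebra k G) →ₗ[k] k := ∑ g : G, coefL k G g

theorem augL_apply (k G : Type) [Field k] [Group G] [Fintype G] (x : MonoidAlgebra k G) :
    augL k G x = ∑ g : G, x.coeff g := by
  exact LinearMap.sum_apply Finset.univ (fun g => coefL k G g) (show RS k G (MonoidAlgebra k G) from x)

/-- the augmentation ideal -/
def augI (k G : Type) [Field k] [Group G] [Fintype G] :
    Submodule (MonoidAlgebra k G) (MonoidAlgebra k G) where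
  carrier := {x | ∑ g : G, x.coeff g = 0}
  zero_mem' := by simp
  add_mem' := by
    intro a b ha hb
    simp only [Set.mem_ofPred_eq] at *
    simp [Finset.sum_add_distrib, ha, hb]
  smul_mem' := by
    intro a x hx
    simp only [Set.mem_ofPred_eq] at *
    induction a using MonoidAlgebra.induction_linear with
    | zero => simp
    | add f g hf hg => simp only [add_smul, MonoidAlgebra.coeff_add, Finsupp.add_apply,
        Finset.sum_add_distrib, hf, hg, add_zero]
    | single g c =>
      simp only [smul_eq_mul, MonoidAlgebra.coeff_single_mul_apply]
      have h2 := Equiv.sum_comp (Equiv.mulLeft g⁻¹) (fun y => x.coeff y)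
      simp only [Equiv.coe_mulLeft] at h2
      rw [← Finset.mul_sum, h2, hx, mul_zero]

theorem finite_augI (k G : Type) [Field k] [Group G] [Fintype G] :
    Module.Finite (MonoidAlgebra k G) (augI k G) := by
  have : Module.Finite k (MonoidAlgebra k G) :=
    Module.Finite.equiv (MonoidAlgebra.coeffLinearEquiv k : MonoidAlgebra k G ≃ₗ[k] (G →₀ k)).symm
  have : IsNoetherian (MonoidAlgebra k G) (MonoidAlgebra k G) := isNoetherian_of_tower k inferInstance
  infer_instance

theorem tr_coef_dt {k G : Type} [Field k] [Group G] [Fintype G] {M : Type}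
    [AddCommGroup M] [Module (MonoidAlgebra k G) M]
    (z : DT k G M (MonoidAlgebra k G)) :
    trLin (dev0 (coefL k G 1)) (dev0_smul _) z = dev0 (augL k G) z := by
  induction z using dt_ind with
  | h0 => rw [map_zero, map_zero]
  | h2 x y hx hy => rw [map_add, map_add, hx, hy]
  | h1 m n =>
    rw [trLin_apply, dev0_dt, augL_apply]
    have : (MonoidAlgebra.single 1 (∑ g : G, n.coeff g) : MonoidAlgebra k G) =
      ∑ g : G, MonoidAlgebra.single 1 (n.coeff g) := by
        exact map_sum (MonoidAlgebra.singleAddHom (1 : G)) _ _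
    rw [this, Finset.sum_smul]
    refine Finset.sum_congr rfl fun g _ => ?_
    rw [smul_dt, dev0_dt]
    have h2 : coefL k G 1 ((MonoidAlgebra.single g⁻¹ 1 : MonoidAlgebra k G) • n) = n.coeff g := by
      change MonoidAlgebra.coeff (MonoidAlgebra.single g⁻¹ 1 * n) 1 = _
      simp
    rw [h2]
    simp [smul_smul, MonoidAlgebra.single_mul_single]

/-- syzygies -/
theorem exists_omega {k G : Type} [Field k] [Group G] [Fintype G]
    (χ : (X : Type) → [AddCommGroup X] → [Module (MonoidAlgebra k G) X] → ℕ)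
    (hT : TensorClosed k G χ) (M : Type)
    [AddCommGroup M] [Module (MonoidAlgebra k G) M] (hM : MemAdloc (MonoidAlgebra k G) χ M)
    (L : Type) [AddCommGroup L] [Module (MonoidAlgebra k G) L] (g : L →ₗ[MonoidAlgebra k G] M)
    (hg : Function.Surjective g) :
    ∃ (K P : Type) (_ : AddCommGroup K) (_ : Module (MonoidAlgebra k G) K)
      (_ : AddCommGroup P) (_ : Module (MonoidAlgebra k G) P)
      (j : K →ₗ[MonoidAlgebra k G] P) (l : P →ₗ[MonoidAlgebra k G] L),
      MemAdloc (MonoidAlgebra k G) χ K ∧ Module.Finite (MonoidAlgebra k G) P ∧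
      Function.Injective j ∧ (∀ p, g (l p) = 0 ↔ ∃ x, j x = p) ∧ ∀ m, ∃ p, g (l p) = m := by
  obtain ⟨s, hs, hs'⟩ := exists_ksection g hg
  have hφ : ∀ (c : k) (m : DT k G M (MonoidAlgebra k G)), s.comp (dev0 (coefL k G 1))
      ((MonoidAlgebra.single 1 c : MonoidAlgebra k G) • m)
      = (MonoidAlgebra.single 1 c : MonoidAlgebra k G) • s.comp (dev0 (coefL k G 1)) m := by
    intro c m
    rw [AddMonoidHom.comp_apply, AddMonoidHom.comp_apply, dev0_smul, hs']
  have key : ∀ p, g (trLin (s.comp (dev0 (M := M) (coefL k G 1))) hφ p) =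
      dev0 (augL k G) p := by
    intro p
    rw [← tr_coef_dt, trLin_apply, trLin_apply, map_sum]
    refine Finset.sum_congr rfl fun g _ => ?_
    rw [map_smul, AddMonoidHom.comp_apply, hs]
  refine ⟨DT k G M (augI k G), DT k G M (MonoidAlgebra k G), inferInstance, inferInstance,
    inferInstance, inferInstance, dmap M (augI k G).subtype,
    trLin (s.comp (dev0 (coefL k G 1))) hφ,
    hT.dt _ _ _ M _ hM (finite_augI k G), (hT.dt _ _ _ M _ hM inferInstance).1,
    dmap_inj M _ (Submodule.subtype_injective _), ?_, ?_⟩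
  · intro p
    rw [key]
    constructor
    · intro h
      refine dmap_dev_exact M _ (augL k G) ?_ p h
      intro y hy
      exact ⟨⟨y, (augL_apply k G y).symm.trans hy⟩, rfl⟩
    · rintro ⟨x, rfl⟩
      induction x using dt_ind with
      | h0 => rw [map_zero, map_zero]
      | h2 x y hx hy => rw [map_add, map_add, hx, hy, add_zero]
      | h1 m n =>
        rw [dmap_dt, dev0_dt, augL_apply]
        have : ∑ g : G, (n : MonoidAlgebra k G).coeff g = 0 := n.2
        rw [Submodule.subtype_apply, this]; simp
  · intro m
    refine ⟨dt m 1, ?_⟩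
    rw [key, dev0_dt, augL_apply]
    have : ∑ g : G, (1 : MonoidAlgebra k G).coeff g = 1 := by
      classical
      simp [MonoidAlgebra.one_def, Finsupp.single_apply]
    rw [this, ← MonoidAlgebra.one_def, one_smul]

/-- the norm element -/
noncomputable def nrm (k G : Type) [Field k] [Group G] [Fintype G] : MonoidAlgebra k G :=
  ∑ g : G, MonoidAlgebra.single g 1

theorem smul_nrm (k G : Type) [Field k] [Group G] [Fintype G] (g : G) (c : k) :
    MonoidAlgebra.single g c * nrm k G = MonoidAlgebra.single 1 c * nrm k G := by
  simp only [nrm, Finset.mul_sum, MonoidAlgebra.single_mul_single, mul_one, one_mul]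
  exact Equiv.sum_comp (Equiv.mulLeft g) (fun y => (MonoidAlgebra.single y c : MonoidAlgebra k G))

theorem exists_smul_nrm (k G : Type) [Field k] [Group G] [Fintype G] (a : MonoidAlgebra k G) :
    ∃ c : k, MonoidAlgebra.single 1 c * nrm k G = a * nrm k G := by
  induction a using MonoidAlgebra.induction_linear with
  | zero => exact ⟨0, by simp⟩
  | add f g hf hg =>
    obtain ⟨c, hc⟩ := hf
    obtain ⟨d, hd⟩ := hg
    exact ⟨c + d, by rw [MonoidAlgebra.single_add, add_mul, add_mul, hc, hd]⟩
  | single g c => exact ⟨c, (smul_nrm k G g c).symm⟩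

theorem tr_dt_one {k G : Type} [Field k] [Group G] [Fintype G] {M : Type}
    [AddCommGroup M] [Module (MonoidAlgebra k G) M] (m : M) :
    ∑ g : G, (MonoidAlgebra.single g 1 : MonoidAlgebra k G) •
      (dt ((MonoidAlgebra.single g⁻¹ 1 : MonoidAlgebra k G) • m) 1 : DT k G M (MonoidAlgebra k G))
      = dt m (nrm k G) := by
  have : (dt m (nrm k G) : DT k G M (MonoidAlgebra k G)) =
    ∑ g : G, dt m (MonoidAlgebra.single g 1) :=
    map_sum (AddMonoidHom.mk' (fun n => (dt m n : DT k G M (MonoidAlgebra k G)))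
      (fun a b => dt_add m a b)) _ _
  rw [this]
  refine Finset.sum_congr rfl fun g _ => ?_
  rw [smul_dt, smul_smul, MonoidAlgebra.single_mul_single, smul_eq_mul, mul_one, mul_inv_cancel,
    mul_one, ← MonoidAlgebra.one_def, one_smul]

/-- cosyzygies -/
theorem exists_coomega {k G : Type} [Field k] [Group G] [Fintype G]
    (χ : (X : Type) → [AddCommGroup X] → [Module (MonoidAlgebra k G) X] → ℕ)
    (hT : TensorClosed k G χ) (M : Type)
    [AddCommGroup M] [Module (MonoidAlgebra k G) M] (hM : MemAdloc (MonoidAlgebra k G) χ M)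
    (L : Type) [AddCommGroup L] [Module (MonoidAlgebra k G) L] (f : M →ₗ[MonoidAlgebra k G] L)
    (hf : Function.Injective f) :
    ∃ (C I : Type) (_ : AddCommGroup C) (_ : Module (MonoidAlgebra k G) C)
      (_ : AddCommGroup I) (_ : Module (MonoidAlgebra k G) I)
      (q : I →ₗ[MonoidAlgebra k G] C) (e : L →ₗ[MonoidAlgebra k G] I),
      MemAdloc (MonoidAlgebra k G) χ C ∧ Module.Finite (MonoidAlgebra k G) I ∧
      Function.Surjective q ∧ (∀ x, q x = 0 ↔ ∃ m, e (f m) = x) ∧ ∀ m, e (f m) = 0 → m = 0 := by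
  obtain ⟨s, hs, hs'⟩ := exists_kretraction f hf
  let φ : L →+ DT k G M (MonoidAlgebra k G) :=
    AddMonoidHom.mk' (fun x => dt (s x) 1) (fun x y => by rw [map_add, add_dt])
  have hφ : ∀ x, φ x = dt (s x) 1 := fun _ => rfl
  have hφs : ∀ (c : k) (m : L), φ ((MonoidAlgebra.single 1 c : MonoidAlgebra k G) • m)
      = (MonoidAlgebra.single 1 c : MonoidAlgebra k G) • φ m := by
    intro c m
    rw [hφ, hφ, hs', smul_dt, ← MonoidAlgebra.one_def, one_smul]
  have key : ∀ m, trLin φ hφs (f m) = dt m (nrm k G) := by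
    intro m
    rw [trLin_apply, ← tr_dt_one]
    refine Finset.sum_congr rfl fun g _ => ?_
    rw [hφ, ← map_smul, hs]
  let S := Submodule.span (MonoidAlgebra k G) {nrm k G}
  refine ⟨DT k G M (MonoidAlgebra k G ⧸ S), DT k G M (MonoidAlgebra k G), inferInstance,
    inferInstance, inferInstance, inferInstance, dmap M S.mkQ, trLin φ hφs,
    hT.dt _ _ _ M _ hM inferInstance, (hT.dt _ _ _ M _ hM inferInstance).1,
    dmap_surj M _ S.mkQ_surjective, ?_, ?_⟩
  · intro x
    constructor
    · intro h
      obtain ⟨m, hm⟩ := dmap_ker_span M S.mkQ (nrm k G) (by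
        intro y hy
        rw [Submodule.mkQ_apply, Submodule.Quotient.mk_eq_zero,
          Submodule.mem_span_singleton] at hy
        obtain ⟨a, rfl⟩ := hy
        exact exists_smul_nrm k G a) x h
      exact ⟨m, (key m).trans hm⟩
    · rintro ⟨m, rfl⟩
      rw [key, dmap_dt]
      have : S.mkQ (nrm k G) = S.mkQ 0 := by
        rw [map_zero, Submodule.mkQ_apply, Submodule.Quotient.mk_eq_zero]
        exact Submodule.mem_span_singleton_self _
      rw [this, ← dmap_dt]
      have h0 : (dt m 0 : DT k G M (MonoidAlgebra k G)) = 0 := by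
        have := dt_add (k := k) (G := G) m (0 : MonoidAlgebra k G) 0
        rw [add_zero] at this
        exact left_eq_add.1 this
      rw [h0, map_zero]
  · intro m hm
    rw [key] at hm
    have := congrArg (dev0 (coefL k G 1)) hm
    rw [map_zero, dev0_dt] at this
    have h1 : coefL k G 1 (nrm k G) = 1 := by
      classical
      change (nrm k G).coeff 1 = 1
      simp [nrm, MonoidAlgebra.coeff_sum, Finsupp.single_apply]
    rw [h1, ← MonoidAlgebra.one_def, one_smul] at this
    exact this

theorem adloc_summand {A : Type} [Ring A]
    (χ : (X : Type) → [AddCommGroup X] → [Module A X] → ℕ) (hχ : IsSubadditive A χ)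
    (X Y : Type) [AddCommGroup X] [Module A X] [AddCommGroup Y] [Module A Y]
    (hX : Module.Finite A X) (hY : Module.Finite A Y) (h : MemAdloc A χ (X × Y)) :
    MemAdloc A χ X := by
  refine ⟨hX, ?_⟩
  intro U V _ _ _ _ hU hV f g hf hfg hg
  have := h.2 U (V × Y) hU inferInstance ((LinearMap.inl A V Y).comp f)
    (g.prodMap LinearMap.id) (fun a b hab => hf (Prod.ext_iff.1 hab).1) ?_ ?_
  · rw [hχ.2.1 X Y hX hY, hχ.2.1 V Y hV hY] at this
    omega
  · rintro ⟨v, y⟩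
    constructor
    · intro h0
      have h0' : g v = 0 ∧ y = 0 := Prod.ext_iff.1 h0
      obtain ⟨u, hu⟩ := (hfg v).1 h0'.1
      exact ⟨u, Prod.ext hu h0'.2.symm⟩
    · rintro ⟨u, hu⟩
      have hu' : f u = v ∧ 0 = y := Prod.ext_iff.1 hu
      exact Prod.ext ((hfg v).2 ⟨u, hu'.1⟩) hu'.2.symm
  · rintro ⟨x, y⟩
    obtain ⟨v, rfl⟩ := hg x
    exact ⟨(v, y), rfl⟩

theorem adloc_ext {A : Type} [Ring A] [IsNoetherianRing A]
    (χ : (X : Type) → [AddCommGroup X] → [Module A X] → ℕ)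
    (M' M M'' : Type) [AddCommGroup M'] [Module A M'] [AddCommGroup M] [Module A M]
    [AddCommGroup M''] [Module A M''] (hM : Module.Finite A M)
    (f : M' →ₗ[A] M) (g : M →ₗ[A] M'')
    (hf : Function.Injective f) (hfg : Function.Exact f g) (hg : Function.Surjective g)
    (h' : MemAdloc A χ M') (h'' : MemAdloc A χ M'') : MemAdloc A χ M := by
  refine ⟨hM, ?_⟩
  intro U V _ _ _ _ hU hV i p hi hip hp
  let W := LinearMap.ker (g.comp p)
  have e1 := h''.2 W V inferInstance hV W.subtype (g.comp p) W.subtype_injective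
    (LinearMap.exact_subtype_ker_map _) (hg.comp hp)
  have e2 := h''.2 M' M h'.1 hM f g hf hfg hg
  have hw : ∀ w : W, p w ∈ LinearMap.range f := fun w => (hfg _).1 w.2
  let r : W →ₗ[A] M' := (LinearEquiv.ofInjective f hf).symm.toLinearMap.comp
    ((p.comp W.subtype).codRestrict (LinearMap.range f) hw)
  have hr : ∀ w : W, f (r w) = p w := by
    intro w
    have := LinearEquiv.apply_symm_apply (LinearEquiv.ofInjective f hf) ⟨p w, hw w⟩
    exact congrArg Subtype.val this
  have hiW : ∀ u, i u ∈ W := fun u => by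
    change g (p (i u)) = 0
    rw [(hip _).2 ⟨u, rfl⟩, map_zero]
  have e3 := h'.2 U W hU inferInstance (i.codRestrict W hiW) r
    (fun a b hab => hi (congrArg Subtype.val hab)) ?_ ?_
  · omega
  · intro w
    rw [← hf.eq_iff, hr, map_zero, hip]
    constructor
    · rintro ⟨u, hu⟩
      exact ⟨u, Subtype.ext hu⟩
    · rintro ⟨u, hu⟩
      exact ⟨u, congrArg Subtype.val hu⟩
  · intro m
    obtain ⟨v, hv⟩ := hp (f m)
    refine ⟨⟨v, ?_⟩, ?_⟩
    · change g (p v) = 0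
      rw [hv]; exact (hfg _).2 ⟨m, rfl⟩
    · apply hf
      rw [hr]; exact hv

/-- For a finite group `G`, a field `k` and a tensor closed subadditive
function `χ` on the finite dimensional `kG`-modules, the additive locus `Adloc(χ)` is a
thick subcategory: it is closed under direct summands and satisfies two-out-of-three for
short exact sequences. -/
theorem statement5 (k G : Type) [Field k] [Group G] [Finite G]
    (χ : (X : Type) → [AddCommGroup X] → [Module (MonoidAlgebra k G) X] → ℕ)
    (hχ : IsSubadditive (MonoidAlgebra k G) χ) (hT : TensorClosed k G χ) :
    (∀ (X Y : Type) [AddCommGroup X] [Module (MonoidAlgebra k G) X]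
        [AddCommGroup Y] [Module (MonoidAlgebra k G) Y],
        Module.Finite (MonoidAlgebra k G) X → Module.Finite (MonoidAlgebra k G) Y →
        MemAdloc (MonoidAlgebra k G) χ (X × Y) → MemAdloc (MonoidAlgebra k G) χ X) ∧
    (∀ (M' M M'' : Type) [AddCommGroup M'] [Module (MonoidAlgebra k G) M']
        [AddCommGroup M] [Module (MonoidAlgebra k G) M]
        [AddCommGroup M''] [Module (MonoidAlgebra k G) M''],
        Module.Finite (MonoidAlgebra k G) M' → Module.Finite (MonoidAlgebra k G) M →
        Module.Finite (MonoidAlgebra k G) M'' →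
        ∀ (f : M' →ₗ[MonoidAlgebra k G] M) (g : M →ₗ[MonoidAlgebra k G] M''),
        Function.Injective f → Function.Exact f g → Function.Surjective g →
        ((MemAdloc (MonoidAlgebra k G) χ M' ∧ MemAdloc (MonoidAlgebra k G) χ M →
            MemAdloc (MonoidAlgebra k G) χ M'') ∧
         (MemAdloc (MonoidAlgebra k G) χ M' ∧ MemAdloc (MonoidAlgebra k G) χ M'' →
            MemAdloc (MonoidAlgebra k G) χ M) ∧
         (MemAdloc (MonoidAlgebra k G) χ M ∧ MemAdloc (MonoidAlgebra k G) χ M'' →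
            MemAdloc (MonoidAlgebra k G) χ M'))) := by
  have := Fintype.ofFinite G
  have : Module.Finite k (MonoidAlgebra k G) :=
    Module.Finite.equiv (MonoidAlgebra.coeffLinearEquiv k : MonoidAlgebra k G ≃ₗ[k] (G →₀ k)).symm
  have : IsNoetherianRing (MonoidAlgebra k G) := isNoetherian_of_tower k inferInstance
  refine ⟨fun X Y _ _ _ _ hX hY h => adloc_summand χ hχ X Y hX hY h, ?_⟩
  intro M' M M'' _ _ _ _ _ _ hM' hM hM'' f g hf hfg hg
  refine ⟨?_, fun h => adloc_ext χ M' M M'' hM f g hf hfg hg h.1 h.2, ?_⟩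
  · rintro ⟨h', h⟩
    obtain ⟨C, I, _, _, _, _, q, e, hC, hI, hq, hqe, he⟩ := exists_coomega χ hT M' h' M f hf
    refine adloc_summand χ hχ M'' I hM'' hI ?_
    have hker : ∀ m, g m = 0 → q (e m) = 0 := by
      intro m hm
      obtain ⟨m', rfl⟩ := (hfg m).1 hm
      exact (hqe _).2 ⟨m', rfl⟩
    let a : M'' →ₗ[MonoidAlgebra k G] C :=
      ((LinearMap.ker g).liftQ (q.comp e) (fun m hm => hker m hm)).comp
        (g.quotKerEquivOfSurjective hg).symm.toLinearMap
    have ha : ∀ m, a (g m) = q (e m) := by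
      intro m
      have h1 : (g.quotKerEquivOfSurjective hg).symm (g m) = (LinearMap.ker g).mkQ m := by
        rw [LinearEquiv.symm_apply_eq]; rfl
      change (LinearMap.ker g).liftQ (q.comp e) (fun m hm => hker m hm)
        ((g.quotKerEquivOfSurjective hg).symm (g m)) = _
      rw [h1]; rfl
    refine adloc_ext χ M (M'' × I) C inferInstance (g.prod e)
      (q.comp (LinearMap.snd _ _ _) - a.comp (LinearMap.fst _ _ _)) ?_ ?_ ?_ h hC
    · rw [injective_iff_map_eq_zero]
      intro m hm
      have hm' : g m = 0 ∧ e m = 0 := Prod.ext_iff.1 hm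
      obtain ⟨m', rfl⟩ := (hfg m).1 hm'.1
      rw [he m' hm'.2, map_zero]
    · rintro ⟨m'', x⟩
      change q x - a m'' = 0 ↔ _
      obtain ⟨m, rfl⟩ := hg m''
      rw [ha, ← map_sub, hqe]
      constructor
      · rintro ⟨m', hm'⟩
        refine ⟨f m' + m, Prod.ext ?_ ?_⟩
        · change g (f m' + m) = g m
          rw [map_add, (hfg _).2 ⟨m', rfl⟩, zero_add]
        · change e (f m' + m) = x
          rw [map_add, hm', sub_add_cancel]
      · rintro ⟨n, hn⟩
        have hn' : g n = g m ∧ e n = x := Prod.ext_iff.1 hn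
        obtain ⟨m', hm'⟩ := (hfg (n - m)).1 (by rw [map_sub, hn'.1, sub_self])
        exact ⟨m', by rw [hm', map_sub, hn'.2]⟩
    · intro c
      obtain ⟨x, rfl⟩ := hq c
      refine ⟨(0, x), ?_⟩
      change q x - a 0 = q x
      rw [map_zero, sub_zero]
  · rintro ⟨h, h''⟩
    obtain ⟨K, P, _, _, _, _, j, l, hK, hP, hj, hjl, hl⟩ := exists_omega χ hT M'' h'' M g hg
    refine adloc_summand χ hχ M' P hM' hP ?_
    have hw : ∀ x : K, l (j x) ∈ LinearMap.range f :=
      fun x => (hfg _).1 ((hjl _).2 ⟨x, rfl⟩)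
    let r : K →ₗ[MonoidAlgebra k G] M' := (LinearEquiv.ofInjective f hf).symm.toLinearMap.comp
      ((l.comp j).codRestrict (LinearMap.range f) hw)
    have hr : ∀ w : K, f (r w) = l (j w) := by
      intro w
      have := LinearEquiv.apply_symm_apply (LinearEquiv.ofInjective f hf) ⟨l (j w), hw w⟩
      exact congrArg Subtype.val this
    refine adloc_ext χ K (M' × P) M inferInstance (r.prod j)
      (l.comp (LinearMap.snd _ _ _) - f.comp (LinearMap.fst _ _ _)) ?_ ?_ ?_ hK h
    · intro x y hxy
      exact hj (Prod.ext_iff.1 hxy).2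
    · rintro ⟨m', p⟩
      change l p - f m' = 0 ↔ _
      constructor
      · intro h0
        have h0' := sub_eq_zero.1 h0
        obtain ⟨x, rfl⟩ := (hjl p).1 (by rw [h0']; exact (hfg _).2 ⟨m', rfl⟩)
        exact ⟨x, Prod.ext (hf ((hr x).trans h0')) rfl⟩
      · rintro ⟨x, hx⟩
        have hx' : r x = m' ∧ j x = p := Prod.ext_iff.1 hx
        rw [← hx'.1, ← hx'.2, hr, sub_self]
    · intro m
      obtain ⟨p, hp⟩ := hl (g m)
      obtain ⟨m', hm'⟩ := (hfg (l p - m)).1 (by rw [map_sub, hp, sub_self])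
      refine ⟨(m', p), ?_⟩
      change l p - f m' = m
      rw [hm', sub_sub_cancel]
end

section
/- Let G be a finite group, k a field, and χ a subadditive function on the finite dimensional kG-modules. Fix a set of representatives S_1, …, S_m of the isomorphism classes of simple kG-modules and define χ'(X) := Σ_{i=1}^m χ(X ⊗_k S_i). Then χ' is a subadditive function and Adloc(χ') = { X finite dimensional kG-module : X ⊗_k Y ∈ Adloc(χ) for all finite dimensional kG-modules Y }. -/
/-- The additive group structure of `dtensor` (that of the tensor product over `k`). -/
noncomputable instance instAddCommGroupDtensor (k G : Type) [Field k] [Group G] (M N : Type)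
    [AddCommGroup M] [Module (MonoidAlgebra k G) M]
    [AddCommGroup N] [Module (MonoidAlgebra k G) N] : AddCommGroup (dtensor k G M N) :=
  @TensorProduct.addCommGroup k _ (RestrictScalars k (MonoidAlgebra k G) M)
    (RestrictScalars k (MonoidAlgebra k G) N) _ _
    (RestrictScalars.module k (MonoidAlgebra k G) M) (RestrictScalars.module k (MonoidAlgebra k G) N)

/-- The `kG`-module structure of `dtensor` (Mathlib's structure on `Representation.asModule`). -/
noncomputable instance instModuleDtensor (k G : Type) [Field k] [Group G] (M N : Type)
    [AddCommGroup M] [Module (MonoidAlgebra k G) M]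
    [AddCommGroup N] [Module (MonoidAlgebra k G) N] :
    @Module (MonoidAlgebra k G) (dtensor k G M N) _
      (instAddCommGroupDtensor k G M N).toAddCommMonoid :=
  Representation.instModuleMonoidAlgebraAsModule
    ((Representation.ofModule (k := k) (G := G) M).tprod (Representation.ofModule N))

section
variable (k G : Type) [Field k] [Group G] {m : ℕ}

/-- `S` is a complete set of representatives of the isomorphism classes of simple
`kG`-modules. -/
def IsCompleteSetOfSimples (S : Fin m → Type)
    [∀ i, AddCommGroup (S i)] [∀ i, Module (MonoidAlgebra k G) (S i)] : Prop :=
  (∀ i, IsSimpleModule (MonoidAlgebra k G) (S i)) ∧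
  (∀ i j, i ≠ j → IsEmpty (S i ≃ₗ[MonoidAlgebra k G] S j)) ∧
  (∀ (N : Type) (_ : AddCommGroup N) (_ : Module (MonoidAlgebra k G) N),
    IsSimpleModule (MonoidAlgebra k G) N → ∃ i, Nonempty (N ≃ₗ[MonoidAlgebra k G] S i))

end

-- BEGIN
open TensorProduct MonoidAlgebra

namespace Aux8

section general
variable {A : Type} [Ring A]
  {χ : (X : Type) → [AddCommGroup X] → [Module A X] → ℕ}

theorem chi_zero (hχ : IsSubadditive A χ) (X : Type) [AddCommGroup X] [Module A X]
    [Subsingleton X] : χ X = 0 := by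
  have h1 := hχ.2.1 X X inferInstance inferInstance
  have h2 := hχ.1 (X × X) X inferInstance inferInstance
    { toFun := fun p => p.1, invFun := fun x => (x, x), map_add' := fun _ _ => rfl,
      map_smul' := fun _ _ => rfl, left_inv := fun _ => Subsingleton.elim _ _,
      right_inv := fun _ => rfl }
  omega

theorem memAdloc_subsingleton (hχ : IsSubadditive A χ) (Z : Type) [AddCommGroup Z] [Module A Z]
    [Subsingleton Z] : MemAdloc A χ Z := by
  refine ⟨inferInstance, ?_⟩
  intro X Y _ _ _ _ hX hY f g hf hfg hg
  rw [chi_zero hχ Z, add_zero]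
  refine hχ.1 X Y hX hY (LinearEquiv.ofBijective f ⟨hf, fun y => ?_⟩)
  exact (hfg y).1 (Subsingleton.elim _ _)

theorem memAdloc_of_equiv (hχ : IsSubadditive A χ) {Z W : Type} [AddCommGroup Z] [Module A Z]
    [AddCommGroup W] [Module A W] (e : Z ≃ₗ[A] W) (h : MemAdloc A χ Z) : MemAdloc A χ W := by
  have hfin := h.1
  have hW : Module.Finite A W := Module.Finite.equiv e
  refine ⟨hW, ?_⟩
  intro X Y _ _ _ _ hX hY f g hf hfg hg
  rw [← hχ.1 Z W hfin hW e]
  refine h.2 X Y hX hY f (e.symm.toLinearMap ∘ₗ g) hf ?_ (e.symm.surjective.comp hg)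
  intro y
  rw [← hfg y]
  simp

theorem memAdloc_ext [IsNoetherianRing A] {Z₁ Z Z₂ : Type}
    [AddCommGroup Z₁] [Module A Z₁] [AddCommGroup Z] [Module A Z] [AddCommGroup Z₂] [Module A Z₂]
    (i : Z₁ →ₗ[A] Z) (p : Z →ₗ[A] Z₂) (hi : Function.Injective i) (hip : Function.Exact i p)
    (hp : Function.Surjective p) (hZ : Module.Finite A Z)
    (h1 : MemAdloc A χ Z₁) (h2 : MemAdloc A χ Z₂) : MemAdloc A χ Z := by
  refine ⟨hZ, ?_⟩
  intro X Y _ _ _ _ hX hY f g hf hfg hg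
  have e1 := h2.2 Z₁ Z h1.1 hZ i p hi hip hp
  let B : Submodule A Y := LinearMap.ker (p ∘ₗ g)
  have e2 := h2.2 B Y inferInstance hY B.subtype (p ∘ₗ g) B.injective_subtype
    (LinearMap.exact_subtype_ker_map _) (hp.comp hg)
  let eZ : Z₁ ≃ₗ[A] LinearMap.range i := LinearEquiv.ofInjective i hi
  have hgB : ∀ b : B, g b ∈ LinearMap.range i := fun b => (hip _).1 b.2
  let g' : B →ₗ[A] Z₁ := eZ.symm.toLinearMap ∘ₗ (g ∘ₗ B.subtype).codRestrict _ hgB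
  have hg' : ∀ b : B, i (g' b) = g b := by
    intro b
    have : eZ (g' b) = ⟨g b, hgB b⟩ := eZ.apply_symm_apply _
    exact congrArg Subtype.val this
  have hfB : ∀ x, f x ∈ B := by
    intro x
    have : g (f x) = 0 := (hfg _).2 ⟨x, rfl⟩
    change p (g (f x)) = 0
    rw [this, map_zero]
  have e3 := h1.2 X B hX inferInstance (f.codRestrict B hfB) g'
    (fun a b hab => hf (congrArg Subtype.val hab)) (by
      intro b
      have : g' b = 0 ↔ g b = 0 := by
        rw [← hg', map_eq_zero_iff i hi]
      rw [this, hfg]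
      constructor
      · rintro ⟨x, hx⟩; exact ⟨x, Subtype.ext hx⟩
      · rintro ⟨x, hx⟩; exact ⟨x, congrArg Subtype.val hx⟩) (by
      intro z
      obtain ⟨y, hy⟩ := hg (i z)
      have hyB : y ∈ B := by
        change p (g y) = 0
        rw [hy]; exact (hip _).2 ⟨z, rfl⟩
      exact ⟨⟨y, hyB⟩, hi (by rw [hg', hy])⟩)
  omega

/-- pushouts of additive sequences are additive -/
theorem pushout_add (hχ : IsSubadditive A χ) {X Y X' Y' Z : Type}
    [AddCommGroup X] [Module A X] [AddCommGroup Y] [Module A Y]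
    [AddCommGroup X'] [Module A X'] [AddCommGroup Y'] [Module A Y']
    [AddCommGroup Z] [Module A Z] (hX : Module.Finite A X) (hY : Module.Finite A Y)
    (hX' : Module.Finite A X') (hY' : Module.Finite A Y') (hZ : Module.Finite A Z)
    (f : X →ₗ[A] Y) (g : Y →ₗ[A] Z) (f' : X' →ₗ[A] Y') (g' : Y' →ₗ[A] Z)
    (hfg : Function.Exact f g) (hg : Function.Surjective g)
    (hf' : Function.Injective f') (hfg' : Function.Exact f' g') (hg' : Function.Surjective g')
    (φ : Y →ₗ[A] Y') (hφ : ∀ y, g' (φ y) = g y) (h : χ X + χ Z = χ Y) : χ X' + χ Z = χ Y' := by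
  have e1 := hχ.2.2 X' Y' Z hX' hY' hZ f' g' hfg' hg'
  let eX : X' ≃ₗ[A] LinearMap.range f' := LinearEquiv.ofInjective f' hf'
  have hr : ∀ x, φ (f x) ∈ LinearMap.range f' := by
    intro x
    refine (hfg' _).1 ?_
    rw [hφ]; exact (hfg _).2 ⟨x, rfl⟩
  let ψ : X →ₗ[A] X' := eX.symm.toLinearMap ∘ₗ (φ ∘ₗ f).codRestrict _ hr
  have hψ : ∀ x, f' (ψ x) = φ (f x) := by
    intro x
    have : eX (ψ x) = ⟨φ (f x), hr x⟩ := eX.apply_symm_apply _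
    exact congrArg Subtype.val this
  have e2 := hχ.2.2 X (X' × Y) Y' hX inferInstance hY' (ψ.prod (-f)) (f'.coprod φ) (by
      rintro ⟨x', y⟩
      constructor
      · intro h0
        have h0 : f' x' + φ y = 0 := h0
        have : g y = 0 := by
          have h3 := congrArg g' h0
          rw [map_add, hφ, (hfg' (f' x')).2 ⟨x', rfl⟩, zero_add, map_zero] at h3
          exact h3
        obtain ⟨x, rfl⟩ := (hfg y).1 this
        refine ⟨-x, ?_⟩
        have : x' = - ψ x := hf' (by rw [map_neg, hψ]; exact eq_neg_of_add_eq_zero_left h0)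
        simp [this]
      · rintro ⟨x, hx⟩
        rw [← hx]
        simp [hψ]) (by
      intro y'
      obtain ⟨y, hy⟩ := hg (g' y')
      obtain ⟨x', hx'⟩ := (hfg' (y' - φ y)).1 (by rw [map_sub, hφ, hy, sub_self])
      exact ⟨(x', y), by simp [hx']⟩)
  rw [hχ.2.1 X' Y hX' hY] at e2
  omega

end general

section tensor

/-- wrapper -/
def DT (k G : Type) [Field k] [Group G] (M N : Type)
    [AddCommGroup M] [Module (MonoidAlgebra k G) M]
    [AddCommGroup N] [Module (MonoidAlgebra k G) N] : Type := dtensor k G M N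

noncomputable instance instDTGroup (k G : Type) [Field k] [Group G] (M N : Type)
    [AddCommGroup M] [Module (MonoidAlgebra k G) M]
    [AddCommGroup N] [Module (MonoidAlgebra k G) N] : AddCommGroup (DT k G M N) :=
  instAddCommGroupDtensor k G M N

noncomputable instance instDTModule (k G : Type) [Field k] [Group G] (M N : Type)
    [AddCommGroup M] [Module (MonoidAlgebra k G) M]
    [AddCommGroup N] [Module (MonoidAlgebra k G) N] : Module (MonoidAlgebra k G) (DT k G M N) :=
  instModuleDtensor k G M N

/-- wrapper -/
def KR (k G : Type) [Field k] [Group G] (M : Type)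
    [AddCommGroup M] [Module (MonoidAlgebra k G) M] : Type := M

noncomputable instance instKRGroup (k G : Type) [Field k] [Group G] (M : Type)
    [h : AddCommGroup M] [Module (MonoidAlgebra k G) M] : AddCommGroup (KR k G M) := h

noncomputable instance instKROrig (k G : Type) [Field k] [Group G] (M : Type)
    [AddCommGroup M] [h : Module (MonoidAlgebra k G) M] : Module (MonoidAlgebra k G) (KR k G M) := h

noncomputable instance instKRModule (k G : Type) [Field k] [Group G] (M : Type)
    [AddCommGroup M] [Module (MonoidAlgebra k G) M] : Module k (KR k G M) :=
  RestrictScalars.module k (MonoidAlgebra k G) M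

instance instKRTower (k G : Type) [Field k] [Group G] (M : Type)
    [AddCommGroup M] [Module (MonoidAlgebra k G) M] :
    IsScalarTower k (MonoidAlgebra k G) (KR k G M) :=
  RestrictScalars.isScalarTower k (MonoidAlgebra k G) M

variable {k G : Type} [Field k] [Group G]


theorem smul_ext {V W : Type} [AddCommGroup V] [Module (MonoidAlgebra k G) V] [AddCommGroup W] [Module (MonoidAlgebra k G) W]
    (f : V →+ W) (h : ∀ g r v, f (single g r • v) = (single g r : (MonoidAlgebra k G)) • f v) (a : (MonoidAlgebra k G)) (v : V) :
    f (a • v) = a • f v := by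
  induction a using MonoidAlgebra.induction_linear with
  | zero => simp
  | add x y hx hy => simp [add_smul, hx, hy]
  | single g r => exact h g r v

/-- Build a linear map. -/
def mkLin {V W : Type} [AddCommGroup V] [Module (MonoidAlgebra k G) V] [AddCommGroup W] [Module (MonoidAlgebra k G) W]
    (f : V →+ W) (h : ∀ g r v, f (single g r • v) = (single g r : (MonoidAlgebra k G)) • f v) : V →ₗ[(MonoidAlgebra k G)] W :=
  { f with map_smul' := smul_ext f h }

/-- k-linearity -/
def KLin (k G : Type) [Field k] [Group G] {V W : Type} [AddCommGroup V] [Module (MonoidAlgebra k G) V]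
    [AddCommGroup W] [Module (MonoidAlgebra k G) W]
    (f : V →+ W) : Prop := ∀ (r : k) v, f ((single 1 r : MonoidAlgebra k G) • v) = (single 1 r : MonoidAlgebra k G) • f v

/-- Turn into a k-linear map. -/
def toK {V W : Type} [AddCommGroup V] [Module (MonoidAlgebra k G) V] [AddCommGroup W] [Module (MonoidAlgebra k G) W]
    (f : V →+ W) (h : KLin k G f) : KR k G V →ₗ[k] KR k G W :=
  { toFun := f, map_add' := f.map_add, map_smul' := h }

theorem kLin_lin {V W : Type} [AddCommGroup V] [Module (MonoidAlgebra k G) V] [AddCommGroup W] [Module (MonoidAlgebra k G) W]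
    (f : V →ₗ[(MonoidAlgebra k G)] W) : KLin k G f.toAddMonoidHom := fun _ _ => f.map_smul _ _

variable {X Y Z S T U : Type} [AddCommGroup X] [Module (MonoidAlgebra k G) X] [AddCommGroup Y] [Module (MonoidAlgebra k G) Y]
    [AddCommGroup Z] [Module (MonoidAlgebra k G) Z] [AddCommGroup S] [Module (MonoidAlgebra k G) S] [AddCommGroup T] [Module (MonoidAlgebra k G) T]
    [AddCommGroup U] [Module (MonoidAlgebra k G) U]

/-- pure tensor -/
noncomputable def dmk (k G : Type) [Field k] [Group G] {X S : Type} [AddCommGroup X]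
    [Module (MonoidAlgebra k G) X] [AddCommGroup S] [Module (MonoidAlgebra k G) S]
    (x : X) (s : S) : DT k G X S :=
  ((show KR k G X from x) ⊗ₜ[k] (show KR k G S from s) :
    KR k G X ⊗[k] KR k G S)

theorem dind {P : DT k G X S → Prop} (h0 : P 0) (hm : ∀ x s, P (dmk k G x s))
    (ha : ∀ a b, P a → P b → P (a + b)) (z) : P z :=
  TensorProduct.induction_on (motive := P) z h0 hm ha

theorem single_dmk (g : G) (r : k) (x : X) (s : S) :
    (single g r : (MonoidAlgebra k G)) • dmk k G x s = dmk k G ((single g r : (MonoidAlgebra k G)) • x) ((single g 1 : (MonoidAlgebra k G)) • s) := by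
  have h1 : (single g r : (MonoidAlgebra k G)) = (single 1 r : (MonoidAlgebra k G)) * single g 1 := by simp
  have h2 : (single 1 r * single g 1 : (MonoidAlgebra k G)) • x = (single 1 r : (MonoidAlgebra k G)) • (single g 1 : (MonoidAlgebra k G)) • x := mul_smul _ _ _
  rw [h1, h2, ← h1]
  have := Representation.single_smul ((Representation.ofModule (k := k) (G := G) X).tprod (Representation.ofModule S)) r g (dmk k G x s)
  refine this.trans ?_
  rfl

/-- tensor of maps -/
noncomputable def dmapK (f : X →+ Y) (hf : KLin k G f) (f' : S →+ T) (hf' : KLin k G f') :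
    DT k G X S →+ DT k G Y T :=
  (TensorProduct.map (toK f hf) (toK f' hf')).toAddMonoidHom

theorem dmapK_dmk (f : X →+ Y) (hf : KLin k G f) (f' : S →+ T) (hf' : KLin k G f') (x : X) (s : S) :
    dmapK f hf f' hf' (dmk k G x s) = dmk k G (f x) (f' s) := rfl

theorem dmapK_kLin (f : X →+ Y) (hf : KLin k G f) (f' : S →+ T) (hf' : KLin k G f') :
    KLin k G (dmapK f hf f' hf') := by
  intro r v
  induction v using dind with
  | h0 => simp
  | hm x s => 
    rw [single_dmk, dmapK_dmk, dmapK_dmk, single_dmk, hf, hf']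
  | ha a b h1 h2 => simp only [smul_add, map_add, h1, h2]

/-- tensor of maps -/
noncomputable def dmap (f : X →ₗ[(MonoidAlgebra k G)] Y) (f' : S →ₗ[(MonoidAlgebra k G)] T) :
    DT k G X S →ₗ[(MonoidAlgebra k G)] DT k G Y T :=
  mkLin (dmapK f.toAddMonoidHom (kLin_lin f) f'.toAddMonoidHom (kLin_lin f')) (by
    intro g r v
    induction v using dind with
    | h0 => simp
    | hm x s => 
      rw [single_dmk, dmapK_dmk, dmapK_dmk, single_dmk]
      congr 1
      · exact f.map_smul _ _
      · exact f'.map_smul _ _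
    | ha a b h1 h2 => simp only [smul_add, map_add, h1, h2])

theorem dmap_dmk (f : X →ₗ[(MonoidAlgebra k G)] Y) (f' : S →ₗ[(MonoidAlgebra k G)] T) (x : X) (s : S) :
    dmap f f' (dmk k G x s) = dmk k G (f x) (f' s) := rfl

theorem dmk_add_left (x y : X) (s : S) : dmk k G (x + y) s = dmk k G x s + dmk k G y s :=
  TensorProduct.add_tmul (R := k) _ _ _

theorem dmk_sum_left {ι : Type} (t : Finset ι) (x : ι → X) (s : S) :
    dmk k G (∑ i ∈ t, x i) s = ∑ i ∈ t, dmk k G (x i) s :=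
  TensorProduct.sum_tmul (R := k) (M := KR k G X) (N := KR k G S) t x s

theorem dmapL_inj (f : X →ₗ[(MonoidAlgebra k G)] Y) (hf : Function.Injective f) :
    Function.Injective (dmap f (LinearMap.id : S →ₗ[(MonoidAlgebra k G)] S)) :=
  Module.Flat.rTensor_preserves_injective_linearMap (M := KR k G S)
    (toK f.toAddMonoidHom (kLin_lin f)) hf

theorem dmapL_surj (f : X →ₗ[(MonoidAlgebra k G)] Y) (hf : Function.Surjective f) :
    Function.Surjective (dmap f (LinearMap.id : S →ₗ[(MonoidAlgebra k G)] S)) :=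
  LinearMap.rTensor_surjective (KR k G S)
    (g := toK f.toAddMonoidHom (kLin_lin f)) hf

theorem dmapL_exact (f : X →ₗ[(MonoidAlgebra k G)] Y) (g : Y →ₗ[(MonoidAlgebra k G)] Z) (hfg : Function.Exact f g)
    (hg : Function.Surjective g) :
    Function.Exact (dmap f (LinearMap.id : S →ₗ[(MonoidAlgebra k G)] S)) (dmap g (LinearMap.id : S →ₗ[(MonoidAlgebra k G)] S)) :=
  rTensor_exact (R := k) (KR k G S)
    (f := toK f.toAddMonoidHom (kLin_lin f)) (g := toK g.toAddMonoidHom (kLin_lin g)) hfg hg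

theorem dmapR_inj (f : S →ₗ[(MonoidAlgebra k G)] T) (hf : Function.Injective f) :
    Function.Injective (dmap (LinearMap.id : X →ₗ[(MonoidAlgebra k G)] X) f) :=
  Module.Flat.lTensor_preserves_injective_linearMap (M := KR k G X)
    (toK f.toAddMonoidHom (kLin_lin f)) hf

theorem dmapR_surj (f : S →ₗ[(MonoidAlgebra k G)] T) (hf : Function.Surjective f) :
    Function.Surjective (dmap (LinearMap.id : X →ₗ[(MonoidAlgebra k G)] X) f) :=
  LinearMap.lTensor_surjective (KR k G X)
    (g := toK f.toAddMonoidHom (kLin_lin f)) hf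

theorem dmapR_exact (f : S →ₗ[(MonoidAlgebra k G)] T) (g : T →ₗ[(MonoidAlgebra k G)] U) (hfg : Function.Exact f g)
    (hg : Function.Surjective g) :
    Function.Exact (dmap (LinearMap.id : X →ₗ[(MonoidAlgebra k G)] X) f) (dmap (LinearMap.id : X →ₗ[(MonoidAlgebra k G)] X) g) :=
  lTensor_exact (R := k) (KR k G X)
    (f := toK f.toAddMonoidHom (kLin_lin f)) (g := toK g.toAddMonoidHom (kLin_lin g)) hfg hg

/-- functoriality in the first variable -/
noncomputable def dcongrL (e : X ≃ₗ[(MonoidAlgebra k G)] Y) (S : Type) [AddCommGroup S] [Module (MonoidAlgebra k G) S] :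
    DT k G X S ≃ₗ[(MonoidAlgebra k G)] DT k G Y S :=
  LinearEquiv.ofBijective (dmap e.toLinearMap LinearMap.id)
    ⟨dmapL_inj _ e.injective, dmapL_surj _ e.surjective⟩

/-- functoriality in the second variable -/
noncomputable def dcongrR (X : Type) [AddCommGroup X] [Module (MonoidAlgebra k G) X] (e : S ≃ₗ[(MonoidAlgebra k G)] T) :
    DT k G X S ≃ₗ[(MonoidAlgebra k G)] DT k G X T :=
  LinearEquiv.ofBijective (dmap LinearMap.id e.toLinearMap)
    ⟨dmapR_inj _ e.injective, dmapR_surj _ e.surjective⟩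

/-- tensor distributes over products -/
noncomputable def dprod (X Y S : Type) [AddCommGroup X] [Module (MonoidAlgebra k G) X] [AddCommGroup Y] [Module (MonoidAlgebra k G) Y]
    [AddCommGroup S] [Module (MonoidAlgebra k G) S] :
    DT k G (X × Y) S ≃ₗ[(MonoidAlgebra k G)] (DT k G X S × DT k G Y S) :=
  LinearEquiv.ofBijective ((dmap (LinearMap.fst (MonoidAlgebra k G) X Y) (LinearMap.id : S →ₗ[(MonoidAlgebra k G)] S)).prod
      (dmap (LinearMap.snd (MonoidAlgebra k G) X Y) (LinearMap.id : S →ₗ[(MonoidAlgebra k G)] S))) (by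
    rw [Function.bijective_iff_has_inverse]
    refine ⟨(dmap (LinearMap.inl (MonoidAlgebra k G) X Y) (LinearMap.id : S →ₗ[(MonoidAlgebra k G)] S)).coprod
      (dmap (LinearMap.inr (MonoidAlgebra k G) X Y) (LinearMap.id : S →ₗ[(MonoidAlgebra k G)] S)), ?_, ?_⟩
    · intro z
      induction z using dind with
      | h0 => simp
      | hm x s =>
        simp only [LinearMap.prod_apply, Function.prod, LinearMap.coprod_apply, dmap_dmk]
        rw [← dmk_add_left]
        simp
      | ha a b h1 h2 => rw [map_add, map_add, h1, h2]
    · have h1 : ∀ z : DT k G X S, dmap (LinearMap.fst (MonoidAlgebra k G) X Y) (LinearMap.id : S →ₗ[(MonoidAlgebra k G)] S) (dmap (LinearMap.inl (MonoidAlgebra k G) X Y) (LinearMap.id : S →ₗ[(MonoidAlgebra k G)] S) z) = z := by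
        intro z
        induction z using dind with
        | h0 => simp
        | hm x s => simp [dmap_dmk]
        | ha a b h1 h2 => rw [map_add, map_add, h1, h2]
      have h2 : ∀ z : DT k G Y S, dmap (LinearMap.snd (MonoidAlgebra k G) X Y) (LinearMap.id : S →ₗ[(MonoidAlgebra k G)] S) (dmap (LinearMap.inr (MonoidAlgebra k G) X Y) (LinearMap.id : S →ₗ[(MonoidAlgebra k G)] S) z) = z := by
        intro z
        induction z using dind with
        | h0 => simp
        | hm x s => simp [dmap_dmk]
        | ha a b h1 h2 => rw [map_add, map_add, h1, h2]
      have h0 : ∀ s : S, dmk k G (0 : X) s = 0 := fun s => TensorProduct.zero_tmul (R := k) _ _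
      have h0' : ∀ s : S, dmk k G (0 : Y) s = 0 := fun s => TensorProduct.zero_tmul (R := k) _ _
      have h3 : ∀ z : DT k G X S, dmap (LinearMap.snd (MonoidAlgebra k G) X Y) (LinearMap.id : S →ₗ[(MonoidAlgebra k G)] S) (dmap (LinearMap.inl (MonoidAlgebra k G) X Y) (LinearMap.id : S →ₗ[(MonoidAlgebra k G)] S) z) = 0 := by
        intro z
        induction z using dind with
        | h0 => simp
        | hm x s => simp [dmap_dmk, h0']
        | ha a b h1 h2 => rw [map_add, map_add, h1, h2, add_zero]
      have h4 : ∀ z : DT k G Y S, dmap (LinearMap.fst (MonoidAlgebra k G) X Y) (LinearMap.id : S →ₗ[(MonoidAlgebra k G)] S) (dmap (LinearMap.inr (MonoidAlgebra k G) X Y) (LinearMap.id : S →ₗ[(MonoidAlgebra k G)] S) z) = 0 := by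
        intro z
        induction z using dind with
        | h0 => simp
        | hm x s => simp [dmap_dmk, h0]
        | ha a b h1 h2 => rw [map_add, map_add, h1, h2, add_zero]
      rintro ⟨a, b⟩
      simp only [LinearMap.prod_apply, Function.prod, LinearMap.coprod_apply, map_add, h1, h2, h3, h4]
      simp)

theorem dsub [Subsingleton S] : Subsingleton (DT k G X S) := by
  have h0 : ∀ x : X, dmk k G x (0 : S) = 0 := fun s => TensorProduct.tmul_zero (R := k) _ _
  refine subsingleton_of_forall_eq 0 fun z => ?_
  induction z using dind with
  | h0 => rfl
  | hm x s => rw [Subsingleton.elim s 0, h0]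
  | ha a b h1 h2 => rw [h1, h2, add_zero]

section fin
variable [Finite G]

theorem finA : Module.Finite k (MonoidAlgebra k G) := by
  exact Module.Finite.of_basis (MonoidAlgebra.basis G k)

theorem noethA : IsNoetherianRing (MonoidAlgebra k G) :=
  have := finA (k := k) (G := G)
  isNoetherian_of_tower k inferInstance

theorem artA : IsArtinianRing (MonoidAlgebra k G) :=
  have := finA (k := k) (G := G)
  isArtinian_of_tower k inferInstance

theorem finK (hX : Module.Finite (MonoidAlgebra k G) X) : Module.Finite k (KR k G X) :=
  have := finA (k := k) (G := G)
  haveI : Module.Finite (MonoidAlgebra k G) (KR k G X) := hX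
  Module.Finite.trans (MonoidAlgebra k G) _

theorem dfin (hX : Module.Finite (MonoidAlgebra k G) X) (hS : Module.Finite (MonoidAlgebra k G) S) :
    Module.Finite (MonoidAlgebra k G) (DT k G X S) := by
  have := finK hX
  have := finK hS
  have h : Module.Finite k (KR k G X ⊗[k] KR k G S) := inferInstance
  have h : Module.Finite k ((Representation.ofModule (k := k) (G := G) X).tprod
    (Representation.ofModule S)).asModule := h
  exact Module.Finite.of_restrictScalars_finite k (MonoidAlgebra k G)
    ((Representation.ofModule (k := k) (G := G) X).tprod (Representation.ofModule S)).asModule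

/-- averaging -/
noncomputable def avg [Fintype G] (f : X →+ Y) (hf : KLin k G f) : X →ₗ[(MonoidAlgebra k G)] Y :=
  mkLin { toFun := fun v => ∑ h : G, (single h 1 : (MonoidAlgebra k G)) • f ((single h⁻¹ 1 : (MonoidAlgebra k G)) • v)
          map_zero' := by simp
          map_add' := by simp [Finset.sum_add_distrib] } (by
    intro g r v
    simp only [AddMonoidHom.coe_mk, ZeroHom.coe_mk, Finset.smul_sum]
    rw [← Equiv.sum_comp (Equiv.mulLeft g)]
    refine Finset.sum_congr rfl fun h _ => ?_
    have e : (single (g * h)⁻¹ 1 : (MonoidAlgebra k G)) * single g r = single 1 r * single h⁻¹ 1 := by simp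
    rw [Equiv.coe_mulLeft, ← mul_smul, e, mul_smul, hf, ← mul_smul, ← mul_smul]
    simp)

theorem avg_apply [Fintype G] (f : X →+ Y) (hf : KLin k G f) (x : X) :
    avg f hf x = ∑ h : G, (single h 1 : (MonoidAlgebra k G)) • f ((single h⁻¹ 1 : (MonoidAlgebra k G)) • x) := rfl

theorem exists_section (π : X →ₗ[(MonoidAlgebra k G)] Y) (hπ : Function.Surjective π) :
    ∃ (σ : Y →+ X), KLin k G σ ∧ ∀ y, π (σ y) = y := by
  obtain ⟨s, hs⟩ := LinearMap.exists_rightInverse_of_surjective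
    (toK π.toAddMonoidHom (kLin_lin π)) (LinearMap.range_eq_top.2 hπ)
  refine ⟨s.toAddMonoidHom, fun r v => s.map_smul r v, fun y => ?_⟩
  exact LinearMap.congr_fun hs y

/-- coefficient at one -/
noncomputable def e0 (n : ℕ) : (Fin n → (MonoidAlgebra k G)) →+ (Fin n → (MonoidAlgebra k G)) where
  toFun p := fun i => single 1 ((p i).coeff 1)
  map_zero' := by ext; simp
  map_add' p q := by ext; simp

theorem e0_kLin (n : ℕ) : KLin k G (e0 (k := k) (G := G) n) := by
  intro r v
  funext i
  simp [e0]

theorem avg_e0 [Fintype G] (n : ℕ) (p : Fin n → (MonoidAlgebra k G)) :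
    avg (e0 (k := k) (G := G) n) (e0_kLin n) p = p := by
  classical
  funext i
  rw [avg_apply, Finset.sum_apply]
  simp [e0]
  ext h
  rw [MonoidAlgebra.coeff_sum, Finsupp.finsetSum_apply]
  simp [Finsupp.single_apply]

theorem exists_lift [Fintype G] (n : ℕ) (f : (Fin n → (MonoidAlgebra k G)) →ₗ[(MonoidAlgebra k G)] X) (g : Y →ₗ[(MonoidAlgebra k G)] DT k G X S)
    (hg : Function.Surjective g) : ∃ φ : DT k G (Fin n → (MonoidAlgebra k G)) S →ₗ[(MonoidAlgebra k G)] Y,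
      ∀ z, g (φ z) = dmap f LinearMap.id z := by
  obtain ⟨σ, hσ, hσ'⟩ := exists_section g hg
  have hf0 : KLin k G (f.toAddMonoidHom.comp (e0 n)) := by
    intro r v
    have := e0_kLin (k := k) (G := G) n r v
    simp only [AddMonoidHom.comp_apply, this]
    exact f.map_smul _ _
  let θ := dmapK (f.toAddMonoidHom.comp (e0 n)) hf0 (AddMonoidHom.id S) (fun _ _ => rfl)
  have hθ : KLin k G θ := dmapK_kLin _ _ _ _
  have hσθ : KLin k G (σ.comp θ) := by
    intro r v
    have e1 := hθ r v
    have e2 := hσ r (θ v)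
    rw [AddMonoidHom.comp_apply, AddMonoidHom.comp_apply, e1, e2]
  refine ⟨avg (σ.comp θ) hσθ, ?_⟩
  intro z
  rw [avg_apply, map_sum]
  simp only [map_smul, AddMonoidHom.comp_apply, hσ']
  induction z using dind with
  | h0 => simp
  | hm x s =>
    conv_rhs => rw [← avg_e0 n x, dmap_dmk, avg_apply, map_sum, dmk_sum_left]
    refine Finset.sum_congr rfl fun h _ => ?_
    have hθm : ∀ (a : Fin n → MonoidAlgebra k G) (b : S),
        θ (dmk k G a b) = dmk k G (f (e0 n a)) b := fun _ _ => rfl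
    rw [single_dmk, hθm, single_dmk, f.map_smul]
    congr 1
    rw [← mul_smul]
    simp only [single_mul_single, mul_inv_cancel, mul_one, LinearMap.id_apply]
    rw [← MonoidAlgebra.one_def, one_smul]
  | ha a b h1 h2 =>
    simp only [smul_add, map_add, Finset.sum_add_distrib, h1, h2]

theorem memAdloc_dtensor {χ : (X : Type) → [AddCommGroup X] → [Module (MonoidAlgebra k G) X] → ℕ}
    (hχ : IsSubadditive (MonoidAlgebra k G) χ) (hX : Module.Finite (MonoidAlgebra k G) X)
    (hS : Module.Finite (MonoidAlgebra k G) S)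
    (H : ∀ (B C : Type) [AddCommGroup B] [Module (MonoidAlgebra k G) B] [AddCommGroup C]
      [Module (MonoidAlgebra k G) C],
      Module.Finite (MonoidAlgebra k G) B → Module.Finite (MonoidAlgebra k G) C →
      ∀ (f : B →ₗ[MonoidAlgebra k G] C) (g : C →ₗ[MonoidAlgebra k G] X),
      Function.Injective f → Function.Exact f g → Function.Surjective g →
      χ (DT k G B S) + χ (DT k G X S) = χ (DT k G C S)) :
    MemAdloc (MonoidAlgebra k G) χ (DT k G X S) := by
  have := noethA (k := k) (G := G)
  have := Fintype.ofFinite G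
  refine ⟨dfin hX hS, ?_⟩
  intro B C _ _ _ _ hB hC f g hf hfg hg
  obtain ⟨n, p, hp⟩ := Module.Finite.exists_fin' (MonoidAlgebra k G) X
  obtain ⟨φ, hφ⟩ := exists_lift n p g hg
  have hex : Function.Exact (LinearMap.ker p).subtype p := LinearMap.exact_subtype_ker_map _
  have h0 := H (LinearMap.ker p) (Fin n → MonoidAlgebra k G) inferInstance inferInstance
    (LinearMap.ker p).subtype p (Submodule.injective_subtype _) hex hp
  exact pushout_add hχ (dfin inferInstance hS) (dfin inferInstance hS) hB hC (dfin hX hS)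
    (dmap (LinearMap.ker p).subtype LinearMap.id) (dmap p LinearMap.id) f g
    (dmapL_exact _ _ hex hp) (dmapL_surj _ hp) hf hfg hg φ hφ h0

theorem main {χ : (X : Type) → [AddCommGroup X] → [Module (MonoidAlgebra k G) X] → ℕ}
    (hχ : IsSubadditive (MonoidAlgebra k G) χ)
    (m : ℕ) (S : Fin m → Type)
    [∀ i, AddCommGroup (S i)] [∀ i, Module (MonoidAlgebra k G) (S i)]
    (hS : IsCompleteSetOfSimples k G S) :
    IsSubadditive (MonoidAlgebra k G) (fun X _ _ => ∑ i, χ (DT k G X (S i))) ∧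
    ∀ (X : Type) [AddCommGroup X] [Module (MonoidAlgebra k G) X],
      MemAdloc (MonoidAlgebra k G) (fun X _ _ => ∑ i, χ (DT k G X (S i))) X ↔
        (Module.Finite (MonoidAlgebra k G) X ∧
          ∀ (Y : Type) (_ : AddCommGroup Y) (_ : Module (MonoidAlgebra k G) Y),
            Module.Finite (MonoidAlgebra k G) Y →
            MemAdloc (MonoidAlgebra k G) χ (DT k G X Y)) := by
  have := noethA (k := k) (G := G)
  have := artA (k := k) (G := G)
  have hSf : ∀ i, Module.Finite (MonoidAlgebra k G) (S i) := fun i => by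
    have := hS.1 i
    infer_instance
  refine ⟨⟨?_, ?_, ?_⟩, ?_⟩
  · intro X Y _ _ _ _ hX hY e
    exact Finset.sum_congr rfl fun i _ =>
      hχ.1 _ _ (dfin hX (hSf i)) (dfin hY (hSf i)) (dcongrL e (S i))
  · intro X Y _ _ _ _ hX hY
    simp only []
    rw [← Finset.sum_add_distrib]
    refine Finset.sum_congr rfl fun i _ => ?_
    have h1 := dfin hX (hSf i)
    have h2 := dfin hY (hSf i)
    rw [hχ.1 _ _ (dfin inferInstance (hSf i)) inferInstance (dprod X Y (S i)), hχ.2.1 _ _ h1 h2]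
  · intro X Y Z _ _ _ _ _ _ hX hY hZ f g hfg hg
    simp only []
    rw [← Finset.sum_add_distrib]
    exact Finset.sum_le_sum fun i _ =>
      hχ.2.2 _ _ _ (dfin hX (hSf i)) (dfin hY (hSf i)) (dfin hZ (hSf i)) _ _
        (dmapL_exact f g hfg hg) (dmapL_surj g hg)
  · intro X _ _
    constructor
    · rintro ⟨hX, h⟩
      refine ⟨hX, ?_⟩
      have key : ∀ i, MemAdloc (MonoidAlgebra k G) χ (DT k G X (S i)) := by
        intro i
        refine memAdloc_dtensor hχ hX (hSf i) ?_
        intro B C _ _ _ _ hB hC f g hf hfg hg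
        have h1 := h B C hB hC f g hf hfg hg
        simp only [] at h1
        rw [← Finset.sum_add_distrib] at h1
        have h2 := (Finset.sum_eq_sum_iff_of_le (s := Finset.univ)
          (f := fun i => χ (DT k G C (S i)))
          (g := fun i => χ (DT k G B (S i)) + χ (DT k G X (S i))) (fun j _ =>
            hχ.2.2 _ _ _ (dfin hB (hSf j)) (dfin hC (hSf j)) (dfin hX (hSf j)) _ _
              (dmapL_exact f g hfg hg) (dmapL_surj g hg))).1 h1.symm
        exact (h2 i (Finset.mem_univ i)).symm
      intro Y _ _ hY
      have hfl : IsFiniteLength (MonoidAlgebra k G) Y :=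
        isFiniteLength_iff_isNoetherian_isArtinian.2 ⟨inferInstance, inferInstance⟩
      clear h
      induction hfl with
      | of_subsingleton =>
        have := dsub (k := k) (G := G) (X := X) (S := ‹Type›)
        exact memAdloc_subsingleton hχ _
      | @of_simple_quotient M _ _ N hN _ ih =>
        have h1 := ih inferInstance
        obtain ⟨i, ⟨e⟩⟩ := hS.2.2 (M ⧸ N) _ _ hN
        have h2 := memAdloc_of_equiv hχ (dcongrR X e.symm) (key i)
        have hex : Function.Exact N.subtype N.mkQ := LinearMap.exact_subtype_mkQ N
        exact memAdloc_ext (dmap LinearMap.id N.subtype) (dmap LinearMap.id N.mkQ)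
          (dmapR_inj _ N.injective_subtype) (dmapR_exact _ _ hex N.mkQ_surjective)
          (dmapR_surj _ N.mkQ_surjective) (dfin hX hY) h1 h2
    · rintro ⟨hX, h⟩
      refine ⟨hX, ?_⟩
      intro B C _ _ _ _ hB hC f g hf hfg hg
      simp only []
      rw [← Finset.sum_add_distrib]
      exact Finset.sum_congr rfl fun i _ =>
        (h (S i) _ _ (hSf i)).2 _ _ (dfin hB (hSf i)) (dfin hC (hSf i)) _ _
          (dmapL_inj f hf) (dmapL_exact f g hfg hg) (dmapL_surj g hg)

end fin
end tensor
end Aux8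

/-- For a subadditive function `χ` on finite dimensional `kG`-modules and
`χ'(X) := Σᵢ χ(X ⊗ Sᵢ)` (sum over the simple modules `Sᵢ`), the function `χ'` is
subadditive and `Adloc(χ')` consists of those finite dimensional `X` such that `X ⊗ Y`
lies in `Adloc(χ)` for all finite dimensional `Y`. -/
theorem statement8 (k G : Type) [Field k] [Group G] [Finite G]
    (χ : (X : Type) → [AddCommGroup X] → [Module (MonoidAlgebra k G) X] → ℕ)
    (hχ : IsSubadditive (MonoidAlgebra k G) χ)
    (m : ℕ) (S : Fin m → Type)
    [∀ i, AddCommGroup (S i)] [∀ i, Module (MonoidAlgebra k G) (S i)]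
    (hS : IsCompleteSetOfSimples k G S) :
    IsSubadditive (MonoidAlgebra k G) (fun X _ _ => ∑ i, χ (dtensor k G X (S i))) ∧
    ∀ (X : Type) [AddCommGroup X] [Module (MonoidAlgebra k G) X],
      MemAdloc (MonoidAlgebra k G) (fun X _ _ => ∑ i, χ (dtensor k G X (S i))) X ↔
        (Module.Finite (MonoidAlgebra k G) X ∧
          ∀ (Y : Type) (_ : AddCommGroup Y) (_ : Module (MonoidAlgebra k G) Y),
            Module.Finite (MonoidAlgebra k G) Y →
            MemAdloc (MonoidAlgebra k G) χ (dtensor k G X Y)) := by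
  exact Aux8.main hχ m S hS
end

section
/- Let k be a field of characteristic p > 0 and G a finite group. Let α : K[t]/(t^p) → KG and β : L[t]/(t^p) → LG be K- respectively L-algebra homomorphisms for field extensions K/k and L/k, with KG flat over K[t]/(t^p) via α and LG flat over L[t]/(t^p) via β. Let Δ(α) and Δ(β) be the corresponding point modules (restrictions to kG of Hom_{K[t]/(t^p)}(KG, K) and Hom_{L[t]/(t^p)}(LG, L)), assumed endofinite. Then Thick(α) = Thick(β) if and only if Adloc(χ_{Δ(α)}) = Adloc(χ_{Δ(β)}), where Thick(α) = { M finite dimensional kG-module : α^*(M ⊗_k K) is projective } and similarly for β. -/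
open Polynomial

/-- The truncated polynomial algebra `B = K[t]/(t^p)`. -/
noncomputable abbrev Bp (K : Type) [Field K] (p : ℕ) : Type :=
  AdjoinRoot ((X : K[X]) ^ p)

/-- The algebra map `B → K` sending `t` to `0`, exhibiting `K = B/(t)` as a `B`-module. -/
noncomputable def resB (K : Type) [Field K] (p : ℕ) (hp : p ≠ 0) : Bp K p →ₐ[K] K :=
  AdjoinRoot.liftAlgHom _ (Algebra.ofId K K) 0 (by simp [zero_pow hp])

/-- Base change of a `kG`-module `M` to a representation of `G` over `K`. -/
noncomputable def rhoK (k K G : Type) [Field k] [Field K] [Algebra k K] [Group G]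
    (M : Type) [AddCommGroup M] [Module (MonoidAlgebra k G) M] :
    Representation K G
      (TensorProduct k K (RestrictScalars k (MonoidAlgebra k G) M)) :=
  MonoidHom.comp
    (Module.End.baseChangeHom k K
      (RestrictScalars k (MonoidAlgebra k G) M)).toRingHom.toMonoidHom
    (Representation.ofModule M)

/-- The base-changed module `M ⊗_k K`, as a module over `KG = MonoidAlgebra K G`. -/
noncomputable abbrev MK (k K G : Type) [Field k] [Field K] [Algebra k K] [Group G]
    (M : Type) [AddCommGroup M] [Module (MonoidAlgebra k G) M] : Type :=
  (rhoK k K G M).asModule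

/-- `χ_α(M) = dim_K Hom_B(α^*(M ⊗_k K), K)`, where `α^*` is restriction along `α`. -/
noncomputable def chiAlpha (k K G : Type) [Field k] [Field K] [Algebra k K] [Group G]
    (p : ℕ) (hp : p ≠ 0) (α : Bp K p →ₐ[K] MonoidAlgebra K G)
    (M : Type) [AddCommGroup M] [Module (MonoidAlgebra k G) M] : ℕ :=
  letI : Module (Bp K p) (MK k K G M) := Module.compHom _ α.toRingHom
  letI : Module (Bp K p) K := Module.compHom K (resB K p hp).toRingHom
  haveI : SMulCommClass (Bp K p) K K :=
    ⟨fun b c x => by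
      show resB K p hp b * (c * x) = c * (resB K p hp b * x); ring⟩
  Module.finrank K ((MK k K G M) →ₗ[Bp K p] K)

/-- `M` belongs to `Thick(α)`: `M` is finite dimensional and `α^*(M ⊗_k K)` is a
projective `B`-module. -/
def MemThick (k K G : Type) [Field k] [Field K] [Algebra k K] [Group G]
    (p : ℕ) (α : Bp K p →ₐ[K] MonoidAlgebra K G)
    (M : Type) [AddCommGroup M] [Module (MonoidAlgebra k G) M] : Prop :=
  Module.Finite (MonoidAlgebra k G) M ∧
  (letI : Module (Bp K p) (MK k K G M) := Module.compHom _ α.toRingHom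
   Module.Projective (Bp K p) (MK k K G M))

section
variable (K G : Type) [Field K] [Group G] (p : ℕ) (hp : p ≠ 0)
  (α : Bp K p →ₐ[K] MonoidAlgebra K G)

/-- The coinduced module `Hom_B(KG, K)` (as a type). -/
noncomputable def CoInd : Type :=
  letI : Module (Bp K p) (MonoidAlgebra K G) := Module.compHom _ α.toRingHom
  letI : Module (Bp K p) K := Module.compHom K (resB K p hp).toRingHom
  MonoidAlgebra K G →ₗ[Bp K p] K

noncomputable instance : AddCommGroup (CoInd K G p hp α) :=
  letI : Module (Bp K p) (MonoidAlgebra K G) := Module.compHom _ α.toRingHom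
  letI : Module (Bp K p) K := Module.compHom K (resB K p hp).toRingHom
  (inferInstance : AddCommGroup (MonoidAlgebra K G →ₗ[Bp K p] K))

noncomputable instance : Module (Bp K p) (CoInd K G p hp α) :=
  letI : Module (Bp K p) (MonoidAlgebra K G) := Module.compHom _ α.toRingHom
  letI : Module (Bp K p) K := Module.compHom K (resB K p hp).toRingHom
  (inferInstance : Module (Bp K p) (MonoidAlgebra K G →ₗ[Bp K p] K))

end

section
variable (K G : Type) [Field K] [Group G] (p : ℕ) (hp : p ≠ 0)
  (α : Bp K p →ₐ[K] MonoidAlgebra K G)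

/-- Right multiplication by `x` on `KG`, as a `B`-linear map. -/
noncomputable def rmulB (x : MonoidAlgebra K G) :
    letI : Module (Bp K p) (MonoidAlgebra K G) := Module.compHom _ α.toRingHom
    MonoidAlgebra K G →ₗ[Bp K p] MonoidAlgebra K G :=
  letI : Module (Bp K p) (MonoidAlgebra K G) := Module.compHom _ α.toRingHom
  { toFun := fun y => y * x
    map_add' := fun a b => add_mul a b x
    map_smul' := fun b y => by
      show (α b * y) * x = α b * (y * x)
      rw [mul_assoc] }

/-- The action of `KG` on `Hom_B(KG, K)` given by `(x · f) y = f (y x)`,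
as a ring homomorphism into the `B`-linear endomorphisms. -/
noncomputable def coindHom :
    MonoidAlgebra K G →+* Module.End (Bp K p) (CoInd K G p hp α) where
  toFun x :=
    letI : Module (Bp K p) (MonoidAlgebra K G) := Module.compHom _ α.toRingHom
    letI : Module (Bp K p) K := Module.compHom K (resB K p hp).toRingHom
    { toFun := fun f =>
        (show MonoidAlgebra K G →ₗ[Bp K p] K from f).comp (rmulB K G p α x)
      map_add' := fun f g => LinearMap.add_comp _ _ _
      map_smul' := fun b f => LinearMap.smul_comp _ _ _ }
  map_one' := by
    letI : Module (Bp K p) (MonoidAlgebra K G) := Module.compHom _ α.toRingHom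
    letI : Module (Bp K p) K := Module.compHom K (resB K p hp).toRingHom
    refine LinearMap.ext fun f => LinearMap.ext fun y => ?_
    show (show MonoidAlgebra K G →ₗ[Bp K p] K from f) (y * 1) =
      (show MonoidAlgebra K G →ₗ[Bp K p] K from f) y
    rw [mul_one]
  map_mul' x₁ x₂ := by
    letI : Module (Bp K p) (MonoidAlgebra K G) := Module.compHom _ α.toRingHom
    letI : Module (Bp K p) K := Module.compHom K (resB K p hp).toRingHom
    refine LinearMap.ext fun f => LinearMap.ext fun y => ?_
    show (show MonoidAlgebra K G →ₗ[Bp K p] K from f) (y * (x₁ * x₂)) =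
      (show MonoidAlgebra K G →ₗ[Bp K p] K from f) ((y * x₁) * x₂)
    rw [mul_assoc]
  map_zero' := by
    letI : Module (Bp K p) (MonoidAlgebra K G) := Module.compHom _ α.toRingHom
    letI : Module (Bp K p) K := Module.compHom K (resB K p hp).toRingHom
    refine LinearMap.ext fun f => LinearMap.ext fun y => ?_
    show (show MonoidAlgebra K G →ₗ[Bp K p] K from f) (y * 0) = 0
    rw [mul_zero, map_zero]
  map_add' x₁ x₂ := by
    letI : Module (Bp K p) (MonoidAlgebra K G) := Module.compHom _ α.toRingHom
    letI : Module (Bp K p) K := Module.compHom K (resB K p hp).toRingHom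
    refine LinearMap.ext fun f => LinearMap.ext fun y => ?_
    show (show MonoidAlgebra K G →ₗ[Bp K p] K from f) (y * (x₁ + x₂)) =
      (show MonoidAlgebra K G →ₗ[Bp K p] K from f) (y * x₁) +
      (show MonoidAlgebra K G →ₗ[Bp K p] K from f) (y * x₂)
    rw [mul_add, map_add]

/-- The `KG`-module structure on the coinduced module `Hom_B(KG, K)`. -/
noncomputable instance : Module (MonoidAlgebra K G) (CoInd K G p hp α) :=
  Module.compHom _ (coindHom K G p hp α)

end

section
variable (k K G : Type) [Field k] [Field K] [Algebra k K] [Group G] (p : ℕ) (hp : p ≠ 0)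
  (α : Bp K p →ₐ[K] MonoidAlgebra K G)

/-- The canonical ring homomorphism `kG → KG`. -/
noncomputable def kGMap : MonoidAlgebra k G →+* MonoidAlgebra K G :=
  MonoidAlgebra.liftNCRingHom (algebraMap k (MonoidAlgebra K G)) (MonoidAlgebra.of K G)
    (fun x y => Algebra.commutes x _)

/-- The point module `Δ_G(α)`: the coinduced module `Hom_B(KG, K)` viewed as a
`kG`-module by restriction along `kG → KG`. -/
noncomputable instance deltaModule : Module (MonoidAlgebra k G) (CoInd K G p hp α) :=
  Module.compHom _ (kGMap k K G)

end

namespace S16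

theorem compLength_eq (R : Type) [Ring R] (M : Type) [AddCommGroup M] [Module R M]
    (h : IsFiniteLength R M) : (compLength R M : ℕ∞) = Module.length R M := by
  have h' := isFiniteLength_iff_exists_compositionSeries.mp h
  unfold compLength
  rw [dif_pos h']
  exact Module.length_compositionSeries _ h'.choose_spec.1 h'.choose_spec.2

section
variable {A : Type} [Ring A] {D : Type} [AddCommGroup D] [Module A D]

theorem finLen_hom (hD : IsFiniteLength (Module.End A D) D)
    (X : Type) [AddCommGroup X] [Module A X] [Module.Finite A X] :
    IsFiniteLength (Module.End A D) (X →ₗ[A] D) := by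
  obtain ⟨n, s, hs⟩ := Module.Finite.exists_fin (R := A) (M := X)
  obtain ⟨_, _⟩ := isFiniteLength_iff_isNoetherian_isArtinian.mp hD
  have h2 : IsFiniteLength (Module.End A D) (Fin n → D) :=
    isFiniteLength_iff_isNoetherian_isArtinian.mpr ⟨inferInstance, inferInstance⟩
  let F : (X →ₗ[A] D) →ₗ[Module.End A D] (Fin n → D) :=
    { toFun := fun f i => f (s i)
      map_add' := fun f g => rfl
      map_smul' := fun e f => rfl }
  refine h2.of_injective (f := F) fun f g hfg => ?_
  refine LinearMap.ext_on_range hs fun i => congrFun hfg i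

def pre {X Y : Type} [AddCommGroup X] [Module A X] [AddCommGroup Y] [Module A Y] (f : X →ₗ[A] Y) :
    (Y →ₗ[A] D) →ₗ[Module.End A D] (X →ₗ[A] D) where
  toFun φ := φ ∘ₗ f
  map_add' _ _ := rfl
  map_smul' _ _ := rfl

theorem chi_iff (hD : IsFiniteLength (Module.End A D) D)
    {X Y Z : Type} [AddCommGroup X] [Module A X] [AddCommGroup Y] [Module A Y]
    [AddCommGroup Z] [Module A Z] [Module.Finite A X] [Module.Finite A Y] [Module.Finite A Z]
    (f : X →ₗ[A] Y) (g : Y →ₗ[A] Z) (h : Function.Exact f g) (hg : Function.Surjective g) :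
    chiMod A D X + chiMod A D Z = chiMod A D Y ↔
      ∀ φ : X →ₗ[A] D, ∃ ψ : Y →ₗ[A] D, ψ ∘ₗ f = φ := by
  have hX := finLen_hom hD X
  have hY := finLen_hom hD Y
  have hZ := finLen_hom hD Z
  obtain ⟨_, _⟩ := isFiniteLength_iff_isNoetherian_isArtinian.mp hX
  have e : Module.length (Module.End A D) (Y →ₗ[A] D) = Module.length (Module.End A D) (Z →ₗ[A] D)
      + Module.length (Module.End A D) (LinearMap.range (pre (D := D) f)) := by
    refine Module.length_eq_add_of_exact (pre g) (pre f).rangeRestrict ?_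
      (LinearMap.surjective_rangeRestrict _) ?_
    · intro a b hab
      exact (LinearMap.cancel_right hg).mp hab
    · intro φ
      constructor
      · intro hφ
        have h0 : φ ∘ₗ f = 0 := congrArg Subtype.val hφ
        have hk : LinearMap.ker g ≤ LinearMap.ker φ := by
          intro y hy
          obtain ⟨x, rfl⟩ := (h y).mp hy
          exact LinearMap.congr_fun h0 x
        refine ⟨(LinearMap.ker g).liftQ φ hk ∘ₗ (g.quotKerEquivOfSurjective hg).symm.toLinearMap, ?_⟩
        ext y
        have : (g.quotKerEquivOfSurjective hg).symm (g y) = Submodule.Quotient.mk y := by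
          rw [LinearEquiv.symm_apply_eq]; rfl
        show (LinearMap.ker g).liftQ φ hk ((g.quotKerEquivOfSurjective hg).symm (g y)) = φ y
        rw [this]; rfl
      · rintro ⟨ψ, rfl⟩
        apply Subtype.ext
        refine LinearMap.ext fun x => ?_
        show ψ (g (f x)) = 0
        rw [h.apply_apply_eq_zero, map_zero]
  have c1 : chiMod A D X + chiMod A D Z = chiMod A D Y ↔
      Module.length (Module.End A D) (X →ₗ[A] D) + Module.length (Module.End A D) (Z →ₗ[A] D)
       = Module.length (Module.End A D) (Y →ₗ[A] D) := by
    rw [← compLength_eq _ _ hX, ← compLength_eq _ _ hY, ← compLength_eq _ _ hZ]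
    unfold chiMod
    norm_cast
  have hZt := Module.length_ne_top_iff.mpr hZ
  rw [c1, e, add_comm, (ENat.add_right_injective_of_ne_top hZt).eq_iff]
  constructor
  · intro hl
    by_contra hc
    have : LinearMap.range (pre (D := D) f) ≠ ⊤ := fun ht => hc fun φ => by
      obtain ⟨ψ, hψ⟩ := LinearMap.range_eq_top.mp ht φ
      exact ⟨ψ, hψ⟩
    exact (Submodule.length_lt this).ne hl.symm
  · intro hl
    have : LinearMap.range (pre (D := D) f) = ⊤ := LinearMap.range_eq_top.mpr hl
    rw [this, Module.length_top]
end

open TensorProduct in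
theorem proj_of_ext {R : Type} [CommRing R] [IsLocalRing R] {S X F Z : Type}
    [AddCommGroup S] [Module R S] (e : IsLocalRing.ResidueField R ≃ₗ[R] S)
    [AddCommGroup X] [Module R X] [AddCommGroup F] [Module R F] [AddCommGroup Z] [Module R Z]
    [Module.Finite R X] [Module.Finite R F] [Module.Projective R F]
    (f : X →ₗ[R] F) (g : F →ₗ[R] Z) (h : Function.Exact f g) (hg : Function.Surjective g)
    (H : ∀ φ : X →ₗ[R] S, ∃ ψ : F →ₗ[R] S, ψ ∘ₗ f = φ) : Module.Projective R Z := by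
  have : Module.Free R F := Module.free_of_flat_of_isLocalRing
  have : Module.Free R Z := by
    refine Module.free_of_lTensor_residueField_injective f g hg h ?_
    rw [injective_iff_map_eq_zero]
    intro u hu
    by_contra hne
    obtain ⟨φ, hφ⟩ := Module.Projective.exists_dual_ne_zero (IsLocalRing.ResidueField R) hne
    let φ0 : X →ₗ[R] IsLocalRing.ResidueField R :=
      (φ.restrictScalars R) ∘ₗ TensorProduct.mk R (IsLocalRing.ResidueField R) X 1
    obtain ⟨ψ, hψ⟩ := H (e.toLinearMap ∘ₗ φ0)
    let ψ0 : F →ₗ[R] IsLocalRing.ResidueField R := e.symm.toLinearMap ∘ₗ ψ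
    let ψ1 : IsLocalRing.ResidueField R ⊗[R] F →ₗ[IsLocalRing.ResidueField R]
      IsLocalRing.ResidueField R := TensorProduct.AlgebraTensorModule.lift
        ((LinearMap.toSpanSingleton (IsLocalRing.ResidueField R) _ ψ0))
    have key : φ = ψ1 ∘ₗ (f.baseChange (IsLocalRing.ResidueField R)) := by
      ext x
      have := LinearMap.congr_fun hψ x
      have h2 : ψ0 (f x) = φ0 x := by
        show e.symm (ψ (f x)) = φ0 x
        rw [LinearEquiv.symm_apply_eq]; exact this
      simpa [ψ1, φ0] using h2.symm
    apply hφ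
    rw [key]
    show ψ1 (f.lTensor _ u) = 0
    rw [hu, map_zero]
  infer_instance

theorem resB_mk (K : Type) [Field K] (p : ℕ) (hp : p ≠ 0) (q : K[X]) :
    resB K p hp (AdjoinRoot.mk _ q) = q.eval 0 := by
  rw [resB, AdjoinRoot.liftAlgHom_mk]; rfl

theorem resB_loc (K : Type) [Field K] (p : ℕ) (hp : p ≠ 0) :
    IsLocalHom (resB K p hp).toRingHom := by
  constructor
  intro b hb
  obtain ⟨q, rfl⟩ := AdjoinRoot.mk_surjective b
  have hb' : IsUnit (q.eval 0) := by rw [← resB_mk K p hp]; exact hb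
  have h2 : IsCoprime (X : K[X]) q := by
    rw [Polynomial.irreducible_X.coprime_iff_not_dvd, Polynomial.X_dvd_iff,
      Polynomial.coeff_zero_eq_eval_zero]
    exact hb'.ne_zero
  obtain ⟨u, v, huv⟩ := h2.pow_left (m := p)
  refine IsUnit.of_mul_eq_one (AdjoinRoot.mk _ v) ?_
  have := congrArg (AdjoinRoot.mk ((X : K[X]) ^ p)) huv
  simpa [mul_comm] using this

theorem Bp_local (K : Type) [Field K] (p : ℕ) (hp : p ≠ 0) : IsLocalRing (Bp K p) :=
  haveI := resB_loc K p hp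
  (resB K p hp).toRingHom.domain_isLocalRing

/-- `K` as a `B`-module. -/
def KB (K : Type) [Field K] (p : ℕ) (_ : p ≠ 0) : Type := K

noncomputable instance (K : Type) [Field K] (p : ℕ) (hp : p ≠ 0) : AddCommGroup (KB K p hp) :=
  inferInstanceAs (AddCommGroup K)

noncomputable instance (K : Type) [Field K] (p : ℕ) (hp : p ≠ 0) : Module (Bp K p) (KB K p hp) :=
  Module.compHom K (resB K p hp).toRingHom

theorem KB_equiv (K : Type) [Field K] (p : ℕ) (hp : p ≠ 0) :
    letI := Bp_local K p hp
    Nonempty (IsLocalRing.ResidueField (Bp K p) ≃ₗ[Bp K p] KB K p hp) := by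
  letI := Bp_local K p hp
  haveI := resB_loc K p hp
  let l := IsLocalRing.ResidueField.lift (resB K p hp).toRingHom
  let L : IsLocalRing.ResidueField (Bp K p) →ₗ[Bp K p] KB K p hp :=
    { toFun := l
      map_add' := map_add l
      map_smul' := fun b x => by
        rw [Algebra.smul_def, map_mul]; rfl }
  refine ⟨LinearEquiv.ofBijective L ⟨l.injective, fun c => ?_⟩⟩
  refine ⟨IsLocalRing.residue _ (algebraMap K _ c), ?_⟩
  exact (IsLocalRing.ResidueField.lift_residue_apply _ _).trans ((resB K p hp).commutes c)

theorem exAux {k K X Y Z : Type} [Field k] [Field K] [Algebra k K] [AddCommGroup X] [Module k X]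
    [AddCommGroup Y] [Module k Y] [AddCommGroup Z] [Module k Z] (f : X →ₗ[k] Y) (g : Y →ₗ[k] Z)
    (h : Function.Exact f g) (hg : Function.Surjective g) :
    Function.Exact (f.lTensor K) (g.lTensor K) :=
  lTensor_exact K h hg

section
variable (k K G : Type) [Field k] [Field K] [Algebra k K] [Group G] (p : ℕ) (hp : p ≠ 0)
  (α : Bp K p →ₐ[K] MonoidAlgebra K G)

/-- `M ⊗ K` with its `B`-module structure. -/
def NB (_ : Bp K p →ₐ[K] MonoidAlgebra K G)
    (M : Type) [AddCommGroup M] [Module (MonoidAlgebra k G) M] : Type := MK k K G M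

section
variable (M : Type) [AddCommGroup M] [Module (MonoidAlgebra k G) M]

noncomputable instance : AddCommGroup (NB k K G p α M) :=
  inferInstanceAs (AddCommGroup (MK k K G M))

noncomputable instance : Module K (NB k K G p α M) :=
  inferInstanceAs (Module K (MK k K G M))

noncomputable instance instKG : Module (MonoidAlgebra K G) (NB k K G p α M) :=
  inferInstanceAs (Module (MonoidAlgebra K G) (MK k K G M))

noncomputable instance instB : Module (Bp K p) (NB k K G p α M) :=
  Module.compHom (MK k K G M) α.toRingHom

end

variable {M : Type} [AddCommGroup M] [Module (MonoidAlgebra k G) M]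

theorem b_smul (b : Bp K p) (x : NB k K G p α M) : b • x = α b • x := rfl

/-- The pure tensor. -/
noncomputable def tm (c : K) (m : M) : NB k K G p α M :=
  (TensorProduct.tmul k c (show RestrictScalars k (MonoidAlgebra k G) M from m) :
    TensorProduct k K (RestrictScalars k (MonoidAlgebra k G) M))

theorem NB_induction {P : NB k K G p α M → Prop} (h0 : P 0)
    (ht : ∀ c m, P (tm k K G p α c m)) (ha : ∀ x y, P x → P y → P (x + y)) (x) : P x :=
  TensorProduct.induction_on (motive := P) x h0 ht ha

theorem tm_add (c : K) (m m' : M) :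
    tm k K G p α c (m + m') = tm k K G p α c m + tm k K G p α c m' :=
  TensorProduct.tmul_add _ _ _

theorem tm_smul (r : k) (c : K) (m : M) :
    tm k K G p α c (algebraMap k (MonoidAlgebra k G) r • m) = tm k K G p α (algebraMap k K r * c) m := by
  rw [← Algebra.smul_def]
  exact (TensorProduct.smul_tmul r c (show RestrictScalars k (MonoidAlgebra k G) M from m)).symm

theorem single_smul_tm (g : G) (c c' : K) (m : M) :
    (MonoidAlgebra.single g c : MonoidAlgebra K G) • tm k K G p α c' m =
      tm k K G p α (c * c') ((MonoidAlgebra.single g 1 : MonoidAlgebra k G) • m) := by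
  refine (Representation.single_smul (ρ := rhoK k K G M) c g _).trans ?_
  rfl

theorem alg_smul_tm (c c' : K) (m : M) :
    (algebraMap K (MonoidAlgebra K G) c) • tm k K G p α c' m = tm k K G p α (c * c') m := by
  have := single_smul_tm k K G p α 1 c c' m
  rw [← MonoidAlgebra.one_def, one_smul] at this
  exact this

theorem K_smul (c : K) (x : NB k K G p α M) :
    c • x = algebraMap K (MonoidAlgebra K G) c • x :=
  (algebraMap_smul (MonoidAlgebra K G) c (show MK k K G M from x)).symm

theorem kGMap_single (g : G) (r : k) : kGMap k K G (MonoidAlgebra.single g r) =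
    MonoidAlgebra.single g (algebraMap k K r) := by
  simp [kGMap, MonoidAlgebra.liftNCRingHom]

theorem kG_smul_tm (a : MonoidAlgebra k G) (c : K) (m : M) :
    kGMap k K G a • tm k K G p α c m = tm k K G p α c (a • m) := by
  induction a using MonoidAlgebra.induction_linear with
  | zero => rw [map_zero, zero_smul, zero_smul]; exact (TensorProduct.tmul_zero _ _).symm
  | add a b ha hb => rw [map_add, add_smul, add_smul, ha, hb, tm_add]
  | single g r =>
    rw [kGMap_single, single_smul_tm, ← tm_smul, smul_smul]
    simp

theorem KG_linear {N : Type} [AddCommGroup N] [Module (MonoidAlgebra K G) N]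
    (F : NB k K G p α M →+ N)
    (h : ∀ g c c' m, F ((MonoidAlgebra.single g c : MonoidAlgebra K G) • tm k K G p α c' m) =
      (MonoidAlgebra.single g c : MonoidAlgebra K G) • F (tm k K G p α c' m))
    (a : MonoidAlgebra K G) (x : NB k K G p α M) : F (a • x) = a • F x := by
  induction a using MonoidAlgebra.induction_linear with
  | zero => simp
  | add a b ha hb => rw [add_smul, map_add, ha, hb, add_smul]
  | single g r =>
    induction x using NB_induction with
    | h0 => simp
    | ht c m => exact h _ _ _ _
    | ha x y hx hy => rw [smul_add, map_add, hx, hy, map_add, smul_add]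

section lift
variable {N : Type} [AddCommGroup N] [Module (MonoidAlgebra K G) N]
  (h : M →+ N) (hh : ∀ (a : MonoidAlgebra k G) m, h (a • m) = kGMap k K G a • h m)

/-- The additive map underlying the lift. -/
noncomputable def liftAdd : NB k K G p α M →+ N :=
  TensorProduct.liftAddHom (R := k) (M := K) (N := RestrictScalars k (MonoidAlgebra k G) M)
    { toFun := fun c => (DistribSMul.toAddMonoidHom N (algebraMap K (MonoidAlgebra K G) c)).comp
        (show RestrictScalars k (MonoidAlgebra k G) M →+ N from h)
      map_zero' := AddMonoidHom.ext fun m => by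
        show algebraMap K (MonoidAlgebra K G) 0 • h m = (0 : N)
        rw [map_zero, zero_smul]
      map_add' := fun c d => AddMonoidHom.ext fun m => by
        show algebraMap K (MonoidAlgebra K G) (c + d) • h m =
          algebraMap K (MonoidAlgebra K G) c • h m + algebraMap K (MonoidAlgebra K G) d • h m
        rw [map_add, add_smul] }
    (fun r c m => by
      show algebraMap K (MonoidAlgebra K G) (r • c) • h m = algebraMap K (MonoidAlgebra K G) c •
        h (algebraMap k (MonoidAlgebra k G) r • (show M from m))
      rw [hh, smul_smul]
      congr 1
      have : kGMap k K G (algebraMap k (MonoidAlgebra k G) r) =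
        algebraMap K (MonoidAlgebra K G) (algebraMap k K r) := kGMap_single k K G 1 r
      rw [this, ← map_mul, Algebra.smul_def, mul_comm])

theorem liftAdd_tm (c : K) (m : M) : liftAdd k K G p α h hh (tm k K G p α c m) =
    algebraMap K (MonoidAlgebra K G) c • h m :=
  TensorProduct.liftAddHom_tmul ..

/-- The `KG`-linear lift. -/
noncomputable def lift : NB k K G p α M →ₗ[MonoidAlgebra K G] N :=
  { liftAdd k K G p α h hh with
    map_smul' := KG_linear k K G p α _ (fun g c c' m => by
      rw [single_smul_tm, liftAdd_tm, liftAdd_tm, hh, kGMap_single, smul_smul, smul_smul]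
      congr 1
      simp [mul_comm]) }

theorem lift_tm (c : K) (m : M) : lift k K G p α h hh (tm k K G p α c m) =
    algebraMap K (MonoidAlgebra K G) c • h m :=
  liftAdd_tm k K G p α h hh c m

end lift

section bc
variable {X Y Z : Type} [AddCommGroup X] [Module (MonoidAlgebra k G) X]
  [AddCommGroup Y] [Module (MonoidAlgebra k G) Y] [AddCommGroup Z] [Module (MonoidAlgebra k G) Z]

/-- The underlying `k`-linear map. -/
noncomputable def rs (f : X →ₗ[MonoidAlgebra k G] Y) :
    RestrictScalars k (MonoidAlgebra k G) X →ₗ[k] RestrictScalars k (MonoidAlgebra k G) Y where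
  toFun := f
  map_add' := map_add f
  map_smul' := fun r x => f.map_smul (algebraMap k (MonoidAlgebra k G) r) x

/-- Base change of a map. -/
noncomputable def bc (f : X →ₗ[MonoidAlgebra k G] Y) : NB k K G p α X →ₗ[Bp K p] NB k K G p α Y where
  toFun := (rs k G f).lTensor K
  map_add' := map_add ((rs k G f).lTensor K)
  map_smul' := fun b x => KG_linear k K G p α
    (show NB k K G p α X →+ NB k K G p α Y from ((rs k G f).lTensor K).toAddMonoidHom)
    (fun g c c' m => by
      rw [single_smul_tm]
      show tm k K G p α (c * c') (f _) = _ • tm k K G p α c' (f m)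
      rw [single_smul_tm, map_smul]) (α b) x

theorem bc_tm (f : X →ₗ[MonoidAlgebra k G] Y) (c : K) (x : X) :
    bc k K G p α f (tm k K G p α c x) = tm k K G p α c (f x) := rfl

theorem bc_KG (f : X →ₗ[MonoidAlgebra k G] Y) (a : MonoidAlgebra K G) (x : NB k K G p α X) :
    bc k K G p α f (a • x) = a • bc k K G p α f x :=
  KG_linear k K G p α (bc k K G p α f).toAddMonoidHom (fun g c c' m => by
      rw [single_smul_tm]
      show tm k K G p α (c * c') (f _) = _ • tm k K G p α c' (f m)
      rw [single_smul_tm, map_smul]) a x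

theorem bc_inj (f : X →ₗ[MonoidAlgebra k G] Y) (hf : Function.Injective f) :
    Function.Injective (bc k K G p α f) :=
  Module.Flat.lTensor_preserves_injective_linearMap (M := K) (rs k G f) hf

theorem bc_surj (f : X →ₗ[MonoidAlgebra k G] Y) (hf : Function.Surjective f) :
    Function.Surjective (bc k K G p α f) :=
  LinearMap.lTensor_surjective K (g := rs k G f) hf

theorem bc_exact (f : X →ₗ[MonoidAlgebra k G] Y) (g : Y →ₗ[MonoidAlgebra k G] Z)
    (h : Function.Exact f g) (hg : Function.Surjective g) :
    Function.Exact (bc k K G p α f) (bc k K G p α g) :=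
  @exAux k K (RestrictScalars k (MonoidAlgebra k G) X) (RestrictScalars k (MonoidAlgebra k G) Y)
    (RestrictScalars k (MonoidAlgebra k G) Z) _ _ _ (inferInstanceAs (AddCommGroup X))
    (RestrictScalars.module k (MonoidAlgebra k G) X) (inferInstanceAs (AddCommGroup Y))
    (RestrictScalars.module k (MonoidAlgebra k G) Y) (inferInstanceAs (AddCommGroup Z))
    (RestrictScalars.module k (MonoidAlgebra k G) Z) (rs k G f) (rs k G g) h hg

end bc

/-- The coinduced module with only its `KG`-structure. -/
def CI : Type := CoInd K G p hp α

noncomputable instance : AddCommGroup (CI K G p hp α) :=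
  inferInstanceAs (AddCommGroup (CoInd K G p hp α))

noncomputable instance : Module (MonoidAlgebra K G) (CI K G p hp α) :=
  Module.compHom (CoInd K G p hp α) (coindHom K G p hp α)

/-- The identity map. -/
noncomputable def toCI : CoInd K G p hp α ≃+ CI K G p hp α := AddEquiv.refl _

theorem toCI_smul (a : MonoidAlgebra k G) (f : CoInd K G p hp α) :
    toCI K G p hp α (a • f) = kGMap k K G a • toCI K G p hp α f := rfl

/-- Evaluation of an element of the coinduced module. -/
noncomputable def ev (f : CI K G p hp α) (y : MonoidAlgebra K G) : K :=
  letI : Module (Bp K p) (MonoidAlgebra K G) := Module.compHom _ α.toRingHom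
  letI : Module (Bp K p) K := Module.compHom K (resB K p hp).toRingHom
  (show MonoidAlgebra K G →ₗ[Bp K p] K from f) y

variable {K G p hp α}

theorem ev_ext {f g : CI K G p hp α} (h : ∀ y, ev K G p hp α f y = ev K G p hp α g y) :
    f = g := by
  letI : Module (Bp K p) (MonoidAlgebra K G) := Module.compHom _ α.toRingHom
  letI : Module (Bp K p) K := Module.compHom K (resB K p hp).toRingHom
  exact LinearMap.ext (f := (show MonoidAlgebra K G →ₗ[Bp K p] K from f)) h

theorem ev_add (f g : CI K G p hp α) (y) :
    ev K G p hp α (f + g) y = ev K G p hp α f y + ev K G p hp α g y := rfl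

theorem ev_smul (a : MonoidAlgebra K G) (f : CI K G p hp α) (y) :
    ev K G p hp α (a • f) y = ev K G p hp α f (y * a) := rfl

theorem ev_B (b : Bp K p) (f : CI K G p hp α) (y) :
    ev K G p hp α f (α b * y) = resB K p hp b * ev K G p hp α f y := by
  letI : Module (Bp K p) (MonoidAlgebra K G) := Module.compHom _ α.toRingHom
  letI : Module (Bp K p) K := Module.compHom K (resB K p hp).toRingHom
  exact LinearMap.map_smul (show MonoidAlgebra K G →ₗ[Bp K p] K from f) b y

variable (hp)

/-- Constructor. -/
noncomputable def mkC (F : MonoidAlgebra K G → K) (h1 : ∀ x y, F (x + y) = F x + F y)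
    (h2 : ∀ b y, F (α b * y) = resB K p hp b * F y) : CI K G p hp α :=
  letI : Module (Bp K p) (MonoidAlgebra K G) := Module.compHom _ α.toRingHom
  letI : Module (Bp K p) K := Module.compHom K (resB K p hp).toRingHom
  show MonoidAlgebra K G →ₗ[Bp K p] K from { toFun := F, map_add' := h1, map_smul' := h2 }

theorem ev_mkC (F : MonoidAlgebra K G → K) (h1 : ∀ x y, F (x + y) = F x + F y)
    (h2 : ∀ b y, F (α b * y) = resB K p hp b * F y) (y) :
    ev K G p hp α (mkC hp F h1 h2) y = F y := rfl

/-- The lift of a map to the coinduced module. -/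
noncomputable def liftC (φ : M →ₗ[MonoidAlgebra k G] CoInd K G p hp α) :
    NB k K G p α M →ₗ[MonoidAlgebra K G] CI K G p hp α :=
  lift k K G p α ((toCI K G p hp α).toAddMonoidHom.comp φ.toAddMonoidHom)
    (fun a m => (congrArg (toCI K G p hp α) (φ.map_smul a m)).trans (toCI_smul k K G p hp α a _))

theorem liftC_tm (φ : M →ₗ[MonoidAlgebra k G] CoInd K G p hp α) (c : K) (m : M) :
    liftC k hp φ (tm k K G p α c m) =
      algebraMap K (MonoidAlgebra K G) c • toCI K G p hp α (φ m) :=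
  lift_tm ..

/-- Adjunction, one way. -/
noncomputable def toB (φ : M →ₗ[MonoidAlgebra k G] CoInd K G p hp α) :
    NB k K G p α M →ₗ[Bp K p] KB K p hp where
  toFun x := ev K G p hp α (liftC k hp φ x) 1
  map_add' x y := by rw [map_add, ev_add]; rfl
  map_smul' b x := by
    rw [b_smul, map_smul, ev_smul, one_mul, ← mul_one (α b), ev_B]; rfl

theorem toB_a_tm (φ : M →ₗ[MonoidAlgebra k G] CoInd K G p hp α) (a : MonoidAlgebra K G) (m : M) :
    toB k hp φ (a • tm k K G p α 1 m) = ev K G p hp α (toCI K G p hp α (φ m)) a := by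
  show ev K G p hp α (liftC k hp φ _) 1 = _
  rw [map_smul, liftC_tm, map_one, one_smul, ev_smul, one_mul]

/-- Adjunction, other way. -/
noncomputable def fromB (ψ : NB k K G p α M →ₗ[Bp K p] KB K p hp) :
    M →ₗ[MonoidAlgebra k G] CoInd K G p hp α where
  toFun m := (toCI K G p hp α).symm (mkC hp (fun a => ψ (a • tm k K G p α 1 m))
    (fun x y => by rw [add_smul, map_add]; rfl)
    (fun b y => by rw [mul_smul, ← b_smul, map_smul]; rfl))
  map_add' m m' := (toCI K G p hp α).injective <| ev_ext fun y => by
    show ψ (y • tm k K G p α 1 (m + m')) = ψ (y • tm k K G p α 1 m) + ψ (y • tm k K G p α 1 m')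
    rw [tm_add, smul_add, map_add]
  map_smul' a m := (toCI K G p hp α).injective <| ev_ext fun y => by
    show ψ (y • tm k K G p α 1 (a • m)) = ψ ((y * kGMap k K G a) • tm k K G p α 1 m)
    rw [mul_smul, kG_smul_tm]

theorem ev_fromB (ψ : NB k K G p α M →ₗ[Bp K p] KB K p hp) (m : M) (a : MonoidAlgebra K G) :
    ev K G p hp α (toCI K G p hp α (fromB k hp ψ m)) a = ψ (a • tm k K G p α 1 m) := rfl

theorem tm_eq (c : K) (m : M) : tm k K G p α c m =
    algebraMap K (MonoidAlgebra K G) c • tm k K G p α 1 m := by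
  rw [alg_smul_tm, mul_one]

theorem NB_hom_ext {N : Type} [AddCommGroup N] [Module (Bp K p) N]
    {F F' : NB k K G p α M →ₗ[Bp K p] N}
    (h : ∀ m, F (tm k K G p α 1 m) = F' (tm k K G p α 1 m)) : F = F' := by
  ext x
  induction x using NB_induction with
  | h0 => simp
  | ht c m =>
    have : tm k K G p α c m = (algebraMap K (Bp K p) c) • tm k K G p α 1 m := by
      rw [b_smul, α.commutes, ← tm_eq]
    rw [this, map_smul, map_smul, h]
  | ha x y hx hy => rw [map_add, map_add, hx, hy]

theorem ext_iff {X Y : Type} [AddCommGroup X] [Module (MonoidAlgebra k G) X]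
    [AddCommGroup Y] [Module (MonoidAlgebra k G) Y] (f : X →ₗ[MonoidAlgebra k G] Y) :
    (∀ φ : X →ₗ[MonoidAlgebra k G] CoInd K G p hp α,
      ∃ ψ : Y →ₗ[MonoidAlgebra k G] CoInd K G p hp α, ψ ∘ₗ f = φ) ↔
    (∀ φ : NB k K G p α X →ₗ[Bp K p] KB K p hp,
      ∃ ψ : NB k K G p α Y →ₗ[Bp K p] KB K p hp, ψ ∘ₗ bc k K G p α f = φ) := by
  constructor
  · intro H φ
    obtain ⟨ψ, hψ⟩ := H (fromB k hp φ)
    refine ⟨toB k hp ψ, NB_hom_ext k fun x => ?_⟩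
    rw [LinearMap.comp_apply, bc_tm, ← one_smul (MonoidAlgebra K G) (tm k K G p α 1 (f x)), toB_a_tm]
    have := LinearMap.congr_fun hψ x
    rw [LinearMap.comp_apply] at this
    rw [this, ev_fromB, one_smul]
  · intro H φ
    obtain ⟨ψ, hψ⟩ := H (toB k hp φ)
    refine ⟨fromB k hp ψ, LinearMap.ext fun x => (toCI K G p hp α).injective <| ev_ext fun a => ?_⟩
    rw [LinearMap.comp_apply, ev_fromB, ← bc_tm, ← bc_KG, ← LinearMap.comp_apply, hψ, toB_a_tm]

end

section final
variable (k : Type) {K G : Type} [Field k] [Field K] [Algebra k K] [Group G] {p : ℕ} (hp : p ≠ 0)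
  {α : Bp K p →ₐ[K] MonoidAlgebra K G}

theorem NB_finite [Finite G] (M : Type) [AddCommGroup M] [Module (MonoidAlgebra k G) M]
    [Module.Finite (MonoidAlgebra k G) M] : Module.Finite (Bp K p) (NB k K G p α M) := by
  have h1 : Module.Finite k (RestrictScalars k (MonoidAlgebra k G) M) := by
    letI : Module (MonoidAlgebra k G) (RestrictScalars k (MonoidAlgebra k G) M) :=
      inferInstanceAs (Module (MonoidAlgebra k G) M)
    haveI : Module.Finite (MonoidAlgebra k G) (RestrictScalars k (MonoidAlgebra k G) M) :=
      inferInstanceAs (Module.Finite (MonoidAlgebra k G) M)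
    haveI : IsScalarTower k (MonoidAlgebra k G) (RestrictScalars k (MonoidAlgebra k G) M) :=
      RestrictScalars.isScalarTower ..
    haveI : Module.Finite k (MonoidAlgebra k G) := inferInstance
    exact Module.Finite.trans (MonoidAlgebra k G) _
  have h2 : Module.Finite K (NB k K G p α M) :=
    inferInstanceAs (Module.Finite K
      (TensorProduct k K (RestrictScalars k (MonoidAlgebra k G) M)))
  have : IsScalarTower K (Bp K p) (NB k K G p α M) := ⟨fun c b x => by
    rw [K_smul, b_smul, b_smul, smul_smul, Algebra.smul_def, map_mul, α.commutes]⟩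
  exact Module.Finite.of_restrictScalars_finite K _ _

/-- `KG` as a `B`-module. -/
def KGB (_ : Bp K p →ₐ[K] MonoidAlgebra K G) : Type := MonoidAlgebra K G

noncomputable instance : AddCommGroup (KGB α) := inferInstanceAs (AddCommGroup (MonoidAlgebra K G))

noncomputable instance : Module (MonoidAlgebra K G) (KGB α) :=
  inferInstanceAs (Module (MonoidAlgebra K G) (MonoidAlgebra K G))

noncomputable instance : Module (Bp K p) (KGB α) :=
  Module.compHom (MonoidAlgebra K G) α.toRingHom

noncomputable instance : Module K (KGB α) := inferInstanceAs (Module K (MonoidAlgebra K G))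

theorem KGB_finite [Finite G] : Module.Finite (Bp K p) (KGB α) := by
  have h2 : Module.Finite K (KGB α) := inferInstanceAs (Module.Finite K (MonoidAlgebra K G))
  have : IsScalarTower K (Bp K p) (KGB α) := ⟨fun c b x => by
    show (α (c • b) * (show MonoidAlgebra K G from x) : MonoidAlgebra K G) = c • (α b * _)
    rw [map_smul, smul_mul_assoc]⟩
  exact Module.Finite.of_restrictScalars_finite K _ _

theorem KGB_proj [Finite G] (hp : p ≠ 0) (hflat : Module.Flat (Bp K p) (KGB α)) :
    Module.Projective (Bp K p) (KGB α) := by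
  have := Bp_local K p hp
  have := KGB_finite (α := α)
  have : Module.Free (Bp K p) (KGB α) := Module.free_of_flat_of_isLocalRing
  infer_instance

theorem NB_free_proj (n : ℕ) (h : Module.Projective (Bp K p) (KGB α)) :
    Module.Projective (Bp K p) (NB k K G p α (Fin n → MonoidAlgebra k G)) := by
  let h0 : (Fin n → MonoidAlgebra k G) →+ (Fin n → KGB α) :=
    { toFun := fun v i => (kGMap k K G (v i) : MonoidAlgebra K G)
      map_zero' := funext fun i => map_zero (kGMap k K G)
      map_add' := fun v w => funext fun i => map_add (kGMap k K G) (v i) (w i) }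
  let s0 := lift k K G p α h0 (fun a m => funext fun i => map_mul (kGMap k K G) a (m i))
  let s : NB k K G p α (Fin n → MonoidAlgebra k G) →ₗ[Bp K p] (Fin n → KGB α) :=
    { toFun := s0
      map_add' := map_add s0
      map_smul' := fun b x => s0.map_smul (α b) x }
  let e : Fin n → NB k K G p α (Fin n → MonoidAlgebra k G) :=
    fun i => tm k K G p α 1 (Pi.single i 1)
  let π : (Fin n → KGB α) →ₗ[Bp K p] NB k K G p α (Fin n → MonoidAlgebra k G) :=
    { toFun := fun v => ∑ i, (show MonoidAlgebra K G from v i) • e i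
      map_add' := fun v w => by
        rw [← Finset.sum_add_distrib]
        exact Finset.sum_congr rfl fun i _ => add_smul _ _ _
      map_smul' := fun b v => by
        rw [RingHom.id_apply, b_smul, Finset.smul_sum]
        exact Finset.sum_congr rfl fun i _ => mul_smul _ _ _ }
  haveI : Module.Projective (Bp K p) (Fin n → KGB α) :=
    Module.Projective.of_equiv (DFinsupp.linearEquivFunOnFintype (R := Bp K p)
      (M := fun _ : Fin n => KGB α))
  refine Module.Projective.of_split s π (NB_hom_ext k fun m => ?_)
  show ∑ i, (show MonoidAlgebra K G from s0 (tm k K G p α 1 m) i) • e i = tm k K G p α 1 m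
  have h1 : s0 (tm k K G p α 1 m) = h0 m := by
    show lift k K G p α h0 _ (tm k K G p α 1 m) = h0 m
    rw [lift_tm, map_one, one_smul]
  rw [h1]
  have h2 : ∀ i, (show MonoidAlgebra K G from h0 m i) • e i =
      tm k K G p α 1 (m i • (Pi.single i 1 : Fin n → MonoidAlgebra k G)) := fun i =>
    kG_smul_tm k K G p α (m i) 1 _
  rw [Finset.sum_congr rfl fun i _ => h2 i]
  let T : (Fin n → MonoidAlgebra k G) →+ NB k K G p α (Fin n → MonoidAlgebra k G) :=
    { toFun := tm k K G p α 1
      map_zero' := TensorProduct.tmul_zero _ _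
      map_add' := tm_add k K G p α 1 }
  show ∑ i, T _ = T m
  rw [← map_sum]
  congr 1
  ext1 j
  simp [Finset.sum_apply, Pi.single_apply]

theorem main [Finite G]
    (hflat : Module.Flat (Bp K p) (KGB α))
    (hend : IsFiniteLength (Module.End (MonoidAlgebra k G) (CoInd K G p hp α)) (CoInd K G p hp α))
    (Z : Type) [AddCommGroup Z] [Module (MonoidAlgebra k G) Z] :
    MemThick k K G p α Z ↔
      MemAdloc (MonoidAlgebra k G) (chiMod (MonoidAlgebra k G) (CoInd K G p hp α)) Z := by
  unfold MemAdloc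
  have : MemThick k K G p α Z ↔ (Module.Finite (MonoidAlgebra k G) Z ∧
    Module.Projective (Bp K p) (NB k K G p α Z)) := Iff.rfl
  rw [this]
  refine and_congr_right fun hfin => ?_
  constructor
  · intro hproj X Y _ _ _ _ _ _ f g hf hfg hg
    rw [chi_iff hend f g hfg hg, ext_iff]
    intro φ
    have hex := bc_exact k K G p α f g hfg hg
    have t := hex.split_tfae'.out 0 1
    obtain ⟨-, l, hl⟩ := t.mp
      ⟨bc_inj k K G p α f hf, Module.projective_lifting_property _ _ (bc_surj k K G p α g hg)⟩
    exact ⟨φ ∘ₗ l, by rw [LinearMap.comp_assoc, hl, LinearMap.comp_id]⟩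
  · intro H
    obtain ⟨n, g, hg⟩ := Module.Finite.exists_fin' (MonoidAlgebra k G) Z
    haveI : IsNoetherianRing (MonoidAlgebra k G) :=
      isNoetherian_of_tower k (inferInstance : IsNoetherian k (MonoidAlgebra k G))
    have hfg : Function.Exact (LinearMap.ker g).subtype g := LinearMap.exact_subtype_ker_map g
    have H2 := H (LinearMap.ker g) (Fin n → MonoidAlgebra k G) inferInstance inferInstance
      (LinearMap.ker g).subtype g (Submodule.subtype_injective _) hfg hg
    rw [chi_iff hend _ g hfg hg, ext_iff] at H2
    letI := Bp_local K p hp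
    obtain ⟨e⟩ := KB_equiv K p hp
    haveI := NB_finite k (α := α) (LinearMap.ker g)
    haveI := NB_finite k (α := α) (Fin n → MonoidAlgebra k G)
    haveI := NB_free_proj k n (KGB_proj hp hflat)
    exact proj_of_ext e _ _ (bc_exact k K G p α _ g hfg hg) (bc_surj k K G p α g hg) H2

end final

end S16

/-- Two π-points `α` (over `K`) and `β` (over `L`) with endofinite point
modules `Δ(α)`, `Δ(β)` satisfy `Thick(α) = Thick(β)` if and only if
`Adloc(χ_{Δ(α)}) = Adloc(χ_{Δ(β)})`. -/
theorem statement16 (k K L G : Type) [Field k] [Field K] [Field L]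
    [Algebra k K] [Algebra k L] [Group G] [Finite G]
    (p : ℕ) [CharP k p] (hp : 0 < p)
    (α : Bp K p →ₐ[K] MonoidAlgebra K G) (β : Bp L p →ₐ[L] MonoidAlgebra L G)
    (hflatα : letI : Module (Bp K p) (MonoidAlgebra K G) := Module.compHom _ α.toRingHom
      Module.Flat (Bp K p) (MonoidAlgebra K G))
    (hflatβ : letI : Module (Bp L p) (MonoidAlgebra L G) := Module.compHom _ β.toRingHom
      Module.Flat (Bp L p) (MonoidAlgebra L G))
    (hendα : IsFiniteLength
      (Module.End (MonoidAlgebra k G) (CoInd K G p hp.ne' α))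
      (CoInd K G p hp.ne' α))
    (hendβ : IsFiniteLength
      (Module.End (MonoidAlgebra k G) (CoInd L G p hp.ne' β))
      (CoInd L G p hp.ne' β)) :
    (∀ (M : Type) [AddCommGroup M] [Module (MonoidAlgebra k G) M],
        MemThick k K G p α M ↔ MemThick k L G p β M) ↔
    (∀ (Z : Type) [AddCommGroup Z] [Module (MonoidAlgebra k G) Z],
        MemAdloc (MonoidAlgebra k G) (chiMod (MonoidAlgebra k G) (CoInd K G p hp.ne' α)) Z ↔
        MemAdloc (MonoidAlgebra k G) (chiMod (MonoidAlgebra k G) (CoInd L G p hp.ne' β)) Z) := by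
  have A := S16.main k hp.ne' (α := α) hflatα hendα
  have B := S16.main k hp.ne' (α := β) hflatβ hendβ
  constructor
  · intro h Z _ _
    rw [← A Z, ← B Z]
    exact h Z
  · intro h Z _ _
    rw [A Z, B Z]
    exact h Z
end
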